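/- Let P and Q be compact metric spaces with dim P = dim Q = 2 and dim(P × Q) = 3, such that P, Q and P × Q are all of basic type (for instance the Pontryagin surfaces). Let σ₁: P^ℤ → P^ℤ and σ₂: Q^ℤ → Q^ℤ be the full shifts. Then mdim(P^ℤ, σ₁) = mdim(Q^ℤ, σ₂) = 2 and mdim(P^ℤ × Q^ℤ, σ₁ × σ₂) = 3; in particular mdim(P^ℤ × Q^ℤ, σ₁ × σ₂) < mdim(P^ℤ, σ₁) + mdim(Q^ℤ, σ₂), so the general inequality mdim(X × Y, T × S) ≤ mdim(X,T) + mdim(Y,S) can be strict. -/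

import Mathlib

open Filter Set
open scoped ENNReal

namespace MeanDimPaper

variable {X : Type*} [TopologicalSpace X]

/-- `α` is an open cover of `X`. -/
def IsOpenCover (α : Set (Set X)) : Prop :=
  (∀ U ∈ α, IsOpen U) ∧ ⋃₀ α = Set.univ

/-- The order of a cover `α`: the maximum `n ≥ 0` such that there exist `n + 1`
pairwise distinct members of `α` with nonempty common intersection. -/
noncomputable def ord (α : Set (Set X)) : ℕ∞ :=
  ⨆ n ∈ {n : ℕ | ∃ f : Fin (n + 1) → Set X,
      Function.Injective f ∧ (∀ i, f i ∈ α) ∧ (⋂ i, f i).Nonempty}, (n : ℕ∞)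

/-- `β` refines `α`: every member of `β` is contained in some member of `α`. -/
def Refines (β α : Set (Set X)) : Prop := ∀ V ∈ β, ∃ U ∈ α, V ⊆ U

/-- `D(α)`: the minimum of `ord β` over open covers `β` refining `α`. -/
noncomputable def covD (α : Set (Set X)) : ℕ∞ :=
  ⨅ β ∈ {β : Set (Set X) | IsOpenCover β ∧ Refines β α}, ord β

/-- Topological (covering) dimension: the supremum of `D(α)` over open covers `α`. -/
noncomputable def topDim (X : Type*) [TopologicalSpace X] : ℕ∞ :=
  ⨆ α ∈ {α : Set (Set X) | IsOpenCover α}, covD α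

/-- Diameter of a set with respect to a distance function `d`. -/
noncomputable def diamD (d : X → X → ℝ) (U : Set X) : ℝ :=
  sSup {r | ∃ x ∈ U, ∃ y ∈ U, r = d x y}

/-- Mesh of a cover: the supremum of the diameters of its members. -/
noncomputable def mesh (d : X → X → ℝ) (α : Set (Set X)) : ℝ :=
  sSup (diamD d '' α)

/-- `widim_ε(X, d)`: the minimum of `D(α)` over open covers `α` with `mesh(α, d) < ε`. -/
noncomputable def widim (ε : ℝ) (d : X → X → ℝ) : ℕ∞ :=
  ⨅ α ∈ {α : Set (Set X) | IsOpenCover α ∧ mesh d α < ε}, covD α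

/-- `d` is a metric on `X` compatible with the topology of `X`. -/
structure IsCompatMetric {X : Type*} [TopologicalSpace X] (d : X → X → ℝ) : Prop where
  refl : ∀ x, d x x = 0
  eq_of : ∀ x y, d x y = 0 → x = y
  symm : ∀ x y, d x y = d y x
  triangle : ∀ x y z, d x z ≤ d x y + d y z
  isOpen_iff : ∀ U : Set X, IsOpen U ↔ ∀ x ∈ U, ∃ ε > 0, ∀ y, d x y < ε → y ∈ U

/-- The dynamical distance `d_n(x, y) = max_{0 ≤ i < n} d(Tⁱ x, Tⁱ y)`. -/
noncomputable def dynDist (d : X → X → ℝ) (T : X → X) (n : ℕ) (x y : X) : ℝ :=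
  sSup {r | ∃ i < n, r = d (T^[i] x) (T^[i] y)}

/-- Mean dimension `mdim(X, T)` computed with the metric `d`:
`lim_{ε → 0} lim_{n → ∞} widim_ε(X, d_n) / n`.  The inner limit exists (by
subadditivity of `n ↦ widim_ε(X, d_n)`) so it coincides with the liminf, and the inner
quantity is monotone as `ε` decreases, so the limit as `ε → 0` is the supremum over
`ε > 0`. -/
noncomputable def mdim (T : X → X) (d : X → X → ℝ) : ℝ≥0∞ :=
  ⨆ (ε : ℝ) (_ : 0 < ε),
    Filter.liminf (fun n : ℕ => (widim ε (dynDist d T n) : ℝ≥0∞) / (n : ℝ≥0∞)) Filter.atTop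

/-- The full shift `σ` on the alphabet `K`: `σ((xₙ)ₙ) = (xₙ₊₁)ₙ`. -/
def shift (K : Type*) : (ℤ → K) → ℤ → K := fun x n => x (n + 1)

end MeanDimPaper

namespace MeanDimPaper

/-! ### Basic facts about orders of covers -/

section Basic
variable {X : Type*} [TopologicalSpace X]

theorem ord_le_of (β : Set (Set X)) (m : ℕ)
    (h : ∀ (n : ℕ) (f : Fin (n + 1) → Set X), Function.Injective f → (∀ i, f i ∈ β) →
      ∀ x, (∀ i, x ∈ f i) → n ≤ m) : ord β ≤ m := by
  unfold ord
  refine iSup₂_le ?_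
  rintro n ⟨f, hf, hm, x, hx⟩
  exact_mod_cast h n f hf hm x (by simpa using hx)

theorem le_ord (β : Set (Set X)) (n : ℕ) (f : Fin (n + 1) → Set X) (hf : Function.Injective f)
    (hm : ∀ i, f i ∈ β) (x : X) (hx : ∀ i, x ∈ f i) : (n : ℕ∞) ≤ ord β := by
  unfold ord
  exact le_iSup₂ (f := fun (n : ℕ) (_ : n ∈ {n : ℕ | ∃ f : Fin (n + 1) → Set X,
      Function.Injective f ∧ (∀ i, f i ∈ β) ∧ (⋂ i, f i).Nonempty}) => (n : ℕ∞)) n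
    ⟨f, hf, hm, x, by simpa using hx⟩

theorem card_le_of_ord (β : Set (Set X)) (m : ℕ) (h : ord β ≤ m) (s : Finset (Set X))
    (hs : ∀ U ∈ s, U ∈ β) (x : X) (hx : ∀ U ∈ s, x ∈ U) : s.card ≤ m + 1 := by
  by_contra hc
  push Not at hc
  obtain ⟨n, hn⟩ : ∃ n, s.card = n + 1 := ⟨s.card - 1, by omega⟩
  let e := s.equivFinOfCardEq hn
  have := le_ord β n (fun i => (e.symm i : Set X))
    (fun i j hij => e.symm.injective (Subtype.ext hij))
    (fun i => hs _ (e.symm i).2) x (fun i => hx _ (e.symm i).2)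
  have h2 := this.trans h
  have h3 : n ≤ m := by exact_mod_cast h2
  omega

theorem covD_le (α β : Set (Set X)) (hβ : IsOpenCover β) (hr : Refines β α) :
    covD α ≤ ord β := by
  unfold covD
  exact iInf₂_le (f := fun (β : Set (Set X)) (_ : β ∈ {β | IsOpenCover β ∧ Refines β α}) => ord β)
    β ⟨hβ, hr⟩

theorem exists_of_covD_le (α : Set (Set X)) (m : ℕ) (h : covD α ≤ m) :
    ∃ β, IsOpenCover β ∧ Refines β α ∧ ord β ≤ m := by
  have h1 : covD α < (m + 1 : ℕ) := lt_of_le_of_lt h (by exact_mod_cast Nat.lt_succ_self m)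
  unfold covD at h1
  rw [iInf_lt_iff] at h1
  obtain ⟨β, h1⟩ := h1
  rw [iInf_lt_iff] at h1
  obtain ⟨hβ, h1⟩ := h1
  refine ⟨β, hβ.1, hβ.2, ?_⟩
  have : ord β < (m : ℕ∞) + 1 := by exact_mod_cast h1
  exact ENat.lt_add_one_iff (ENat.coe_ne_top m) |>.1 this

theorem covD_le_topDim (α : Set (Set X)) (hα : IsOpenCover α) : covD α ≤ topDim X := by
  unfold topDim
  exact le_iSup₂ (f := fun (α : Set (Set X)) (_ : α ∈ {α : Set (Set X) | IsOpenCover α}) => covD α)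
    α hα

theorem topDim_le (m : ℕ∞) (h : ∀ α : Set (Set X), IsOpenCover α → covD α ≤ m) :
    topDim X ≤ m := by
  unfold topDim
  exact iSup₂_le (fun α hα => h α hα)

/-- A finite partition of unity indexed by natural numbers below `n`. -/
structure PU (n : ℕ) (ρ : ℕ → X → ℝ) : Prop where
  cont : ∀ j, Continuous (ρ j)
  nonneg : ∀ j x, 0 ≤ ρ j x
  zero : ∀ j x, n ≤ j → ρ j x = 0
  sum : ∀ x, ∑ j ∈ Finset.range n, ρ j x = 1

open Classical in
/-- Active indices at a point. -/
noncomputable def act (n : ℕ) (ρ : ℕ → X → ℝ) (x : X) : Finset ℕ :=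
  (Finset.range n).filter (fun j => 0 < ρ j x)

theorem mem_act {n : ℕ} {ρ : ℕ → X → ℝ} (h : PU n ρ) {x : X} {j : ℕ} :
    j ∈ act n ρ x ↔ 0 < ρ j x := by
  unfold act
  simp only [Finset.mem_filter, Finset.mem_range, and_iff_right_iff_imp]
  intro hj
  by_contra hc
  have := h.zero j x (by omega)
  linarith

theorem act_nonempty {n : ℕ} {ρ : ℕ → X → ℝ} (h : PU n ρ) (x : X) : (act n ρ x).Nonempty := by
  by_contra hc
  rw [Finset.not_nonempty_iff_eq_empty] at hc
  have h0 : ∀ j ∈ Finset.range n, ρ j x = 0 := by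
    intro j _
    have : j ∉ act n ρ x := by simp [hc]
    rw [mem_act h] at this
    exact le_antisymm (not_lt.1 this) (h.nonneg j x)
  have := h.sum x
  rw [Finset.sum_eq_zero h0] at this
  norm_num at this

end Basic

theorem exists_PU_ord {X : Type*} [TopologicalSpace X] [CompactSpace X] [T2Space X] (k : ℕ)
    (β : Set (Set X)) (hβ : IsOpenCover β) (ho : ord β ≤ k) :
    ∃ (n : ℕ) (ρ : ℕ → X → ℝ), PU n ρ ∧ (∀ x, (act n ρ x).card ≤ k + 1) ∧
      ∀ j < n, ∃ U ∈ β, ∀ x, 0 < ρ j x → x ∈ U := by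
  obtain ⟨t, ht⟩ := isCompact_univ.elim_finite_subcover (fun U : β => (U : Set X))
    (fun U => hβ.1 U U.2) (by rw [← hβ.2, sUnion_eq_iUnion])
  let e := t.equivFin
  set n := t.card with hn
  let V : Fin n → Set X := fun i => ((e.symm i : β) : Set X)
  have hVinj : Function.Injective V := by
    intro i j hij
    have : ((e.symm i : β)) = (e.symm j : β) := Subtype.ext hij
    exact e.symm.injective (Subtype.ext this)
  have hVβ : ∀ i, V i ∈ β := fun i => (e.symm i : β).2
  have hcov : univ ⊆ ⋃ i, V i := by
    intro x hx
    have := ht hx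
    simp only [mem_iUnion] at this ⊢
    obtain ⟨U, hU, hxU⟩ := this
    exact ⟨e ⟨U, hU⟩, by simpa [V] using hxU⟩
  obtain ⟨f, hf⟩ := PartitionOfUnity.exists_isSubordinate isClosed_univ V
    (fun i => hβ.1 _ (hVβ i)) hcov
  have hsupp : ∀ i x, 0 < f i x → x ∈ V i := fun i x hx =>
    hf i (subset_tsupport _ (by simpa using hx.ne'))
  have hPU : PU n (fun j x => if h : j < n then f ⟨j, h⟩ x else 0) := by
    refine ⟨?_, ?_, ?_, ?_⟩
    · intro j
      by_cases h : j < n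
      · simp only [h, dif_pos]; exact (f ⟨j, h⟩).continuous
      · simp only [h, dif_neg, not_false_eq_true]; exact continuous_const
    · intro j x
      by_cases h : j < n
      · simp only [h, dif_pos]; exact f.nonneg _ x
      · simp [h]
    · intro j x h
      simp [not_lt.2 h]
    · intro x
      have h1 := f.sum_eq_one (mem_univ x)
      rw [finsum_eq_sum_of_fintype] at h1
      rw [Finset.sum_range, ← h1]
      refine Finset.sum_congr rfl (fun i _ => by simp)
  refine ⟨n, _, hPU, ?_, ?_⟩
  · intro x
    classical
    set A := act n (fun j x => if h : j < n then f ⟨j, h⟩ x else 0) x with hA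
    have key : ∀ j ∈ A, ∃ h : j < n, x ∈ V ⟨j, h⟩ := by
      intro j hj
      rw [hA, mem_act hPU] at hj
      by_cases h : j < n
      · exact ⟨h, hsupp _ _ (by simpa [h] using hj)⟩
      · simp [h] at hj
    let W : ℕ → Set X := fun j => if h : j < n then V ⟨j, h⟩ else ∅
    have hc : (A.image W).card = A.card := by
      apply Finset.card_image_of_injOn
      intro i hi j hj hij
      obtain ⟨h1, _⟩ := key i hi
      obtain ⟨h2, _⟩ := key j hj
      simp only [W, h1, h2, dif_pos] at hij
      simpa using hVinj hij
    rw [← hc]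
    apply card_le_of_ord β k ho _ _ x
    · intro U hU
      obtain ⟨j, hj, rfl⟩ := Finset.mem_image.1 hU
      obtain ⟨h, hx⟩ := key j hj
      simpa [W, h] using hx
    · intro U hU
      obtain ⟨j, hj, rfl⟩ := Finset.mem_image.1 hU
      obtain ⟨h, hx⟩ := key j hj
      simpa [W, h] using hVβ _
  · intro j hj
    refine ⟨_, hVβ ⟨j, hj⟩, fun x hx => (hsupp _ _ ?_)⟩
    simpa [hj] using hx

theorem exists_PU {X : Type*} [TopologicalSpace X] [CompactSpace X] [T2Space X] (k : ℕ)
    (hk : topDim X ≤ k) (α : Set (Set X)) (hα : IsOpenCover α) :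
    ∃ (n : ℕ) (ρ : ℕ → X → ℝ), PU n ρ ∧ (∀ x, (act n ρ x).card ≤ k + 1) ∧
      ∀ j < n, ∃ U ∈ α, ∀ x, 0 < ρ j x → x ∈ U := by
  obtain ⟨β, hβ, hr, ho⟩ := exists_of_covD_le α k ((covD_le_topDim α hα).trans hk)
  obtain ⟨n, ρ, h1, h2, h3⟩ := exists_PU_ord k β hβ ho
  refine ⟨n, ρ, h1, h2, fun j hj => ?_⟩
  obtain ⟨U, hU, hs⟩ := h3 j hj
  obtain ⟨V, hV, hUV⟩ := hr U hU
  exact ⟨V, hV, fun x hx => hUV (hs x hx)⟩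

/-- Partial sums. -/
noncomputable def psum {X : Type*} (ρ : ℕ → X → ℝ) (k : ℕ) (x : X) : ℝ := ∑ j ∈ Finset.range k, ρ j x

theorem psum_mono {X : Type*} [TopologicalSpace X] {n : ℕ} {ρ : ℕ → X → ℝ} (h : PU n ρ) (x : X) :
    Monotone (fun k => psum ρ k x) := by
  apply monotone_nat_of_le_succ
  intro k
  simp only [psum, Finset.sum_range_succ]
  linarith [h.nonneg k x]

/-- Staircase covers. -/
theorem staircase {X : Type*} [TopologicalSpace X] {A : Type*} [Fintype A]
    (n : A → ℕ) (ρ : A → ℕ → X → ℝ) (h : ∀ a, PU (n a) (ρ a)) (m : ℕ)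
    (hm : ∀ x, ∑ a, ((act (n a) (ρ a) x).card - 1) ≤ m) :
    ∃ β : Set (Set X), IsOpenCover β ∧ ord β ≤ m ∧
      ∀ W ∈ β, ∃ i : A → ℕ, ∀ a, ∀ x ∈ W, 0 < ρ a (i a) x := by
  classical
  let W : (A → ℕ) → Set X := fun i =>
    {x | ∃ t : ℝ, ∀ a, psum (ρ a) (i a) x < t ∧ t < psum (ρ a) (i a + 1) x}
  have hcont : ∀ a k, Continuous (psum (ρ a) k) := fun a k =>
    continuous_finsetSum _ (fun j _ => (h a).cont j)
  refine ⟨range W, ⟨?_, ?_⟩, ?_, ?_⟩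
  · rintro _ ⟨i, rfl⟩
    have : W i = ⋃ t : ℝ, ⋂ a, {x | psum (ρ a) (i a) x < t} ∩ {x | t < psum (ρ a) (i a + 1) x} := by
      ext x; simp [W]
    rw [this]
    refine isOpen_iUnion fun t => isOpen_iInter_of_finite fun a => ?_
    exact (isOpen_lt (hcont a _) continuous_const).inter (isOpen_lt continuous_const (hcont a _))
  · rw [eq_univ_iff_forall]
    intro x
    let B : Set ℝ := ⋃ a, ⋃ k ∈ Finset.range (n a + 1), {psum (ρ a) k x}
    have hB : B.Finite := by
      refine Set.finite_iUnion fun a => ?_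
      exact Set.Finite.biUnion (Finset.finite_toSet _) (fun _ _ => Set.finite_singleton _)
    obtain ⟨t, ht, htB⟩ := ((Set.Ioo_infinite (show (0:ℝ) < 1 by norm_num)).diff hB).nonempty
    have hex : ∀ a, ∃ k, psum (ρ a) k x < t ∧ t < psum (ρ a) (k + 1) x := by
      intro a
      have he : ∃ k, t < psum (ρ a) k x := ⟨n a, by
        have := (h a).sum x
        simp only [psum, this]; exact ht.2⟩
      have h1 := Nat.find_spec he
      have h0 : Nat.find he ≠ 0 := by
        intro h0
        rw [h0] at h1
        simp [psum] at h1
        linarith [ht.1]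
      obtain ⟨k, hk⟩ := Nat.exists_eq_succ_of_ne_zero h0
      have h2 : ¬ t < psum (ρ a) k x := Nat.find_min he (by omega)
      have hkn : Nat.find he ≤ n a := Nat.find_min' he (by
        have := (h a).sum x
        simp only [psum, this]; exact ht.2)
      refine ⟨k, lt_of_le_of_ne (not_lt.1 h2) ?_, by rw [hk] at h1; exact h1⟩
      intro heq
      apply htB
      simp only [B, mem_iUnion]
      exact ⟨a, k, by simp; omega, by simp [heq]⟩
    choose i hi using hex
    exact ⟨W i, ⟨i, rfl⟩, t, hi⟩
  · apply ord_le_of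
    intro N f hf hfm x hx
    choose i hi using hfm
    have hx' : ∀ q, ∃ t : ℝ, ∀ a, psum (ρ a) (i q a) x < t ∧ t < psum (ρ a) (i q a + 1) x := by
      intro q
      have := hx q
      rw [← hi q] at this
      exact this
    choose t ht using hx'
    let T : A → Finset ℝ := fun a =>
      ((act (n a) (ρ a) x).image (fun k => psum (ρ a) k x)).erase 0
    have hT : ∀ a, (T a).card ≤ (act (n a) (ρ a) x).card - 1 := by
      intro a
      have hz : (0:ℝ) ∈ (act (n a) (ρ a) x).image (fun k => psum (ρ a) k x) := by
        rw [Finset.mem_image]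
        refine ⟨(act (n a) (ρ a) x).min' (act_nonempty (h a) x), Finset.min'_mem _ _, ?_⟩
        apply Finset.sum_eq_zero
        intro j hj
        have hj' : j ∉ act (n a) (ρ a) x := by
          intro hc
          have := Finset.min'_le _ _ hc
          have hj2 := Finset.mem_range.1 hj
          omega
        rw [mem_act (h a)] at hj'
        exact le_antisymm (not_lt.1 hj') ((h a).nonneg j x)
      rw [Finset.card_erase_of_mem hz]
      exact Nat.sub_le_sub_right Finset.card_image_le 1
    let B : Finset ℝ := Finset.univ.biUnion T
    have hB : B.card ≤ m := (Finset.card_biUnion_le.trans (Finset.sum_le_sum fun a _ => hT a)).trans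
      (hm x)
    let cnt : Fin (N + 1) → Fin (m + 1) := fun q => ⟨(B.filter (fun b => b ≤ t q)).card, by
      have := Finset.card_filter_le B (fun b => b ≤ t q)
      omega⟩
    have main : ∀ q r, t q ≤ t r → cnt q = cnt r → q = r := by
      intro q r hqr hc
      have hc' : (B.filter (fun b => b ≤ t q)).card = (B.filter (fun b => b ≤ t r)).card := by
        simpa [cnt] using hc
      have hsub : B.filter (fun b => b ≤ t q) ⊆ B.filter (fun b => b ≤ t r) := by
        intro b hb
        simp only [Finset.mem_filter] at hb ⊢
        exact ⟨hb.1, hb.2.trans hqr⟩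
      have heq := Finset.eq_of_subset_of_card_le hsub hc'.ge
      have hlab : i q = i r := by
        funext a
        have hmono := psum_mono (h a) x
        rcases lt_trichotomy (i q a) (i r a) with hlt | he | hgt
        · exfalso
          have h1 : psum (ρ a) (i q a + 1) x ≤ psum (ρ a) (i r a) x := hmono (by omega)
          have h2 := (ht q a).2
          have h3 := (ht r a).1
          have h4 := (ht r a).2
          have h5 := (ht q a).1
          have h6 : (0:ℝ) ≤ psum (ρ a) (i q a) x :=
            Finset.sum_nonneg (fun j _ => (h a).nonneg j x)
          have hmem : psum (ρ a) (i r a) x ∈ B := by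
            simp only [B, Finset.mem_biUnion, Finset.mem_univ, true_and]
            refine ⟨a, Finset.mem_erase.2 ⟨by linarith, Finset.mem_image.2 ⟨i r a, ?_, rfl⟩⟩⟩
            rw [mem_act (h a)]
            simp only [psum, Finset.sum_range_succ] at h3 h4
            linarith
          have : psum (ρ a) (i r a) x ∈ B.filter (fun b => b ≤ t r) :=
            Finset.mem_filter.2 ⟨hmem, h3.le⟩
          rw [← heq, Finset.mem_filter] at this
          linarith [this.2]
        · exact he
        · exfalso
          have h1 : psum (ρ a) (i r a + 1) x ≤ psum (ρ a) (i q a) x := hmono (by omega)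
          linarith [(ht r a).2, (ht q a).1]
      apply hf
      rw [← hi q, ← hi r, hlab]
    have hinj : Function.Injective cnt := by
      intro q r hqr
      rcases le_total (t q) (t r) with hle | hle
      · exact main q r hle hqr
      · exact (main r q hle hqr.symm).symm
    have := Fintype.card_le_of_injective cnt hinj
    simp at this
    exact this
  · rintro _ ⟨i, rfl⟩
    refine ⟨i, fun a x hx => ?_⟩
    obtain ⟨t, ht⟩ := hx
    have := ht a
    simp only [psum, Finset.sum_range_succ] at this
    linarith [this.1, this.2]

end MeanDimPaper

namespace MeanDimPaper

section Cochain
variable {X F : Type*} [Field F]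

/-- Alternating coboundary on cochains defined on lists. -/
def dl : (List X → F) → List X → F
  | _, [] => 0
  | c, (x :: L) => c L - dl (fun l => c (x :: l)) L

theorem dl_nil (c : List X → F) : dl c [] = 0 := by simp [dl]
theorem dl_cons (c : List X → F) (x : X) (L : List X) :
    dl c (x :: L) = c L - dl (fun l => c (x :: l)) L := by simp [dl]

theorem dl_add (c c' : List X → F) (L : List X) : dl (fun l => c l + c' l) L = dl c L + dl c' L := by
  induction L generalizing c c' with
  | nil => simp [dl]
  | cons x L ih => simp only [dl_cons, ih]; ring

theorem dl_mul (k : F) (c : List X → F) (L : List X) : dl (fun l => k * c l) L = k * dl c L := by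
  induction L generalizing c with
  | nil => simp [dl]
  | cons x L ih => simp only [dl_cons, ih]; ring

theorem dl_neg (c : List X → F) (L : List X) : dl (fun l => - c l) L = - dl c L := by
  have := dl_mul (-1) c L
  simpa using this

theorem dl_sub (c c' : List X → F) (L : List X) : dl (fun l => c l - c' l) L = dl c L - dl c' L := by
  have := dl_add c (fun l => - c' l) L
  rw [dl_neg] at this
  simpa [sub_eq_add_neg] using this

theorem dl_zero (L : List X) : dl (fun _ => (0:F)) L = 0 := by
  have := dl_mul (0:F) (fun _ => (0:F)) L
  simpa using this

/-- dl only depends on the values on lists of length one less that are sublists. -/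
theorem dl_congr (c c' : List X → F) (L : List X)
    (h : ∀ l, l.Sublist L → l.length + 1 = L.length → c l = c' l) : dl c L = dl c' L := by
  induction L generalizing c c' with
  | nil => simp [dl]
  | cons x L ih =>
    simp only [dl_cons]
    rw [h L (List.sublist_cons_self x L) (by simp)]
    rw [ih (fun l => c (x :: l)) (fun l => c' (x :: l))]
    intro l hl hlen
    exact h _ (hl.cons_cons x) (by simp [hlen])

def lmul (a : X → F) (c : List X → F) : List X → F
  | [] => 0
  | x :: l => a x * c (x :: l)

def cupOne (h : X → F) (c : List X → F) : List X → F
  | [] => 0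
  | [_] => 0
  | x :: y :: l => (h y - h x) * c (y :: l)

theorem dl_lmul (a : X → F) (c : List X → F) (y z : X) (l : List X) :
    dl (lmul a c) (y :: z :: l) = cupOne a c (y :: z :: l) + a y * dl c (y :: z :: l) := by
  rw [dl_cons, dl_cons c]
  have : dl (fun l => lmul a c (y :: l)) (z :: l) = a y * dl (fun l => c (y :: l)) (z :: l) := by
    rw [← dl_mul]; rfl
  rw [this]
  simp only [lmul, cupOne]; ring

theorem dl_cupOne (h : X → F) (c : List X → F) (x y z : X) (l : List X) :
    dl (cupOne h c) (x :: y :: z :: l) = - ((h y - h x) * dl c (y :: z :: l)) := by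
  rw [dl_cons]
  have : dl (fun l => cupOne h c (x :: l)) (y :: z :: l)
      = dl (lmul (fun t => h t - h x) c) (y :: z :: l) := by
    congr 1
    funext L
    cases L <;> simp [cupOne, lmul]
  rw [this, dl_lmul]
  simp only [cupOne]; ring

def cup : List (X → F) → List X → F
  | [] => fun l => if l.length = 1 then 1 else 0
  | h :: hs => cupOne h (cup hs)

theorem dl_cup (hs : List (X → F)) (L : List X) (hL : L.length = hs.length + 2) :
    dl (cup hs) L = 0 := by
  induction hs generalizing L with
  | nil =>
    match L, hL with
    | [x, y], _ => simp [dl, cup]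
  | cons h hs ih =>
    match L, hL with
    | x :: y :: z :: l, hL =>
      rw [cup, dl_cupOne, ih (y :: z :: l) (by simpa using hL)]; simp

theorem cup_zero (hs : List (X → F)) (L : List X) (h : X → F) (hh : h ∈ hs)
    (hc : ∀ x ∈ L, ∀ y ∈ L, h x = h y) : cup hs L = 0 := by
  induction hs generalizing L with
  | nil => simp at hh
  | cons g hs ih =>
    match L with
    | [] => simp [cup, cupOne]
    | [_] => simp [cup, cupOne]
    | x :: y :: l =>
      rw [cup, cupOne]
      rcases List.mem_cons.1 hh with rfl | hh
      · rw [hc x (by simp) y (by simp)]; simp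
      · rw [ih (y :: l) hh (fun a ha b hb => hc a (List.mem_cons_of_mem _ ha) b
          (List.mem_cons_of_mem _ hb))]; simp

variable [PseudoMetricSpace X]

def Small (η : ℝ) (l : List X) : Prop := ∀ x ∈ l, ∀ y ∈ l, dist x y < η

theorem Small.sub {η : ℝ} {l l' : List X} (h : Small η l) (hl : l' ⊆ l) : Small η l' :=
  fun x hx y hy => h x (hl hx) y (hl hy)

theorem Small.mono {η η' : ℝ} {l : List X} (h : Small η l) (hl : η ≤ η') : Small η' l :=
  fun x hx y hy => (h x hx y hy).trans_le hl

def InN (Es : List (Set X)) (m : ℕ) (η : ℝ) (w : List X → F) : Prop :=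
  ∃ c : List X → F, (∀ l, Small η l → l.length = m → (∃ E ∈ Es, ∀ x ∈ l, x ∈ E) → c l = 0) ∧
    ∀ l, Small η l → l.length = m + 1 → w l = dl c l

theorem InN.congr {Es : List (Set X)} {m : ℕ} {η : ℝ} {w w' : List X → F} (h : InN Es m η w)
    (hw : ∀ l, Small η l → l.length = m + 1 → w l = w' l) : InN Es m η w' := by
  obtain ⟨c, h1, h2⟩ := h
  exact ⟨c, h1, fun l hl hm => by rw [← hw l hl hm, h2 l hl hm]⟩

theorem InN.mono {Es : List (Set X)} {m : ℕ} {η η' : ℝ} {w : List X → F} (h : InN Es m η w)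
    (hη : η' ≤ η) : InN Es m η' w := by
  obtain ⟨c, h1, h2⟩ := h
  exact ⟨c, fun l hl => h1 l (hl.mono hη), fun l hl => h2 l (hl.mono hη)⟩

theorem InN.zero {Es : List (Set X)} {m : ℕ} {η : ℝ} : InN Es m η (fun _ => (0:F)) :=
  ⟨fun _ => 0, fun _ _ _ _ => rfl, fun l _ _ => by rw [dl_zero]⟩

theorem InN.add {Es : List (Set X)} {m : ℕ} {η : ℝ} {w w' : List X → F} (h : InN Es m η w)
    (h' : InN Es m η w') : InN Es m η (fun l => w l + w' l) := by
  obtain ⟨c, h1, h2⟩ := h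
  obtain ⟨c', h1', h2'⟩ := h'
  refine ⟨fun l => c l + c' l, fun l hl hm hE => ?_, fun l hl hm => ?_⟩
  · simp only [h1 l hl hm hE, h1' l hl hm hE, add_zero]
  · rw [dl_add, ← h2 l hl hm, ← h2' l hl hm]

theorem InN.smul {Es : List (Set X)} {m : ℕ} {η : ℝ} {w : List X → F} (h : InN Es m η w)
    (k : F) : InN Es m η (fun l => k * w l) := by
  obtain ⟨c, h1, h2⟩ := h
  refine ⟨fun l => k * c l, fun l hl hm hE => ?_, fun l hl hm => ?_⟩
  · simp only [h1 l hl hm hE, mul_zero]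
  · rw [dl_mul, ← h2 l hl hm]

/-- changing the functions -/
theorem change (η : ℝ) (T : List ((X → F) × (X → F) × Set X))
    (h1 : ∀ t ∈ T, ∀ x ∈ t.2.2, t.1 x = t.2.1 x)
    (h2 : ∀ t ∈ T, ∀ x ∈ t.2.2, ∀ y ∈ t.2.2, dist x y < η → t.1 x = t.1 y) :
    InN (T.map fun t => t.2.2) T.length η
      (fun l => cup (T.map fun t => t.1) l - cup (T.map fun t => t.2.1) l) := by
  induction T with
  | nil => simpa using InN.zero
  | cons t T ih =>
    obtain ⟨c, hc1, hc2⟩ := ih (fun t ht => h1 t (List.mem_cons_of_mem _ ht))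
      (fun t ht => h2 t (List.mem_cons_of_mem _ ht))
    obtain ⟨h, h', E⟩ := t
    set hs := T.map (fun t => t.1) with hhs
    set hs' := T.map (fun t => t.2.1) with hhs'
    have A : InN (((h, h', E) :: T).map fun t => t.2.2) (T.length + 1) η
        (fun l => cupOne (fun x => h x - h' x) (cup hs) l) := by
      refine ⟨lmul (fun x => h x - h' x) (cup hs), ?_, ?_⟩
      · rintro l hl hm ⟨E', hE', hlE⟩
        match l, hm with
        | x :: l, hm =>
          rw [lmul]
          rw [List.map_cons, List.mem_cons] at hE'
          rcases hE' with rfl | hE'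
          · have e1 : h x = h' x := h1 _ (List.mem_cons_self) x (hlE x (by simp))
            rw [e1]; simp
          · obtain ⟨t, ht, rfl⟩ := List.mem_map.1 hE'
            rw [cup_zero hs _ t.1 (List.mem_map.2 ⟨t, ht, rfl⟩), mul_zero]
            intro a ha b hb
            exact h2 t (List.mem_cons_of_mem _ ht) a (hlE a ha) b (hlE b hb) (hl a ha b hb)
      · intro l hl hm
        match l, hm with
        | y :: z :: l, hm =>
          rw [dl_lmul, dl_cup _ _ (by simp [hhs] at hm ⊢; omega)]; simp
    have B : InN (((h, h', E) :: T).map fun t => t.2.2) (T.length + 1) η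
        (fun l => cupOne h' (fun l => cup hs l - cup hs' l) l) := by
      by_cases hT : T = []
      · subst hT
        refine InN.zero.congr (fun l _ _ => ?_)
        have : (fun l => cup hs l - cup hs' l) = fun _ => 0 := by
          funext l; simp [hhs, hhs']
        rw [this]
        match l with
        | [] => simp [cupOne]
        | [_] => simp [cupOne]
        | _ :: _ :: _ => simp [cupOne]
      · have hTl : 1 ≤ T.length := List.length_pos_iff.2 hT
        refine ⟨fun l => - cupOne h' c l, ?_, ?_⟩
        · rintro l hl hm ⟨E', hE', hlE⟩
          match l, hm with
          | [x], hm => simp [cupOne]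
          | x :: y :: l, hm =>
            simp only [cupOne]
            rw [List.map_cons, List.mem_cons] at hE'
            rcases hE' with rfl | hE'
            · have hx := hlE x (by simp)
              have hy := hlE y (by simp)
              have e1 := h1 _ List.mem_cons_self x hx
              have e2 := h1 _ List.mem_cons_self y hy
              have e3 := h2 _ List.mem_cons_self x hx y hy (hl x (by simp) y (by simp))
              simp only at e1 e2 e3
              rw [← e1, ← e2, e3]; simp
            · rw [hc1 (y :: l) (hl.sub (by simp)) (by simpa using hm)
                ⟨E', hE', fun a ha => hlE a (List.mem_cons_of_mem _ ha)⟩]; simp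
        · intro l hl hm
          match l, hm with
          | [x, y], hm =>
            have : 2 = T.length + 1 + 1 := hm
            omega
          | x :: y :: z :: l, hm =>
            have e := hc2 (y :: z :: l) (hl.sub (by simp)) (by simpa using hm)
            rw [dl_neg, dl_cupOne, ← e]
            simp [cupOne]
    have := A.add B
    refine this.congr (fun l _ hm => ?_)
    match l, hm with
    | x :: y :: l, hm =>
      simp only [cupOne, List.map_cons, cup, hhs, hhs']
      ring

noncomputable def ind (F : Type*) [Field F] (g : X → ℝ) : X → F := by
  classical exact fun x => if g x ≤ 0 then 1 else 0

def farSet (g : X → ℝ) : Set X := {x | 1/2 ≤ |g x|}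

def Ess (F : Type*) [Field F] (gs : List (X → ℝ)) : Prop :=
  ∀ η > 0, ¬ InN (gs.map farSet) gs.length η (cup (gs.map (ind F)))

end Cochain
end MeanDimPaper

namespace MeanDimPaper

theorem exists_big {X : Type*} [TopologicalSpace X] {n : ℕ} {ρ : ℕ → X → ℝ} (h : PU n ρ) (x : X) :
    0 < n ∧ ∃ j < n, 1 / (n : ℝ) ≤ ρ j x := by
  have hn : 0 < n := by
    rcases Nat.eq_zero_or_pos n with rfl | h0
    · have := h.sum x
      simp at this
    · exact h0
  refine ⟨hn, ?_⟩
  by_contra hcon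
  push Not at hcon
  have : ∑ j ∈ Finset.range n, ρ j x < ∑ j ∈ Finset.range n, 1 / (n : ℝ) :=
    Finset.sum_lt_sum_of_nonempty (by simpa using hn.ne') (fun j hj => hcon j (Finset.mem_range.1 hj))
  rw [h.sum x] at this
  simp at this
  field_simp at this
  simp at this

theorem unif_small {X : Type*} [PseudoMetricSpace X] [CompactSpace X] {g : X → ℝ} (hg : Continuous g)
    {ε : ℝ} (hε : 0 < ε) : ∃ η > 0, ∀ x y, dist x y < η → |g x - g y| < ε := by
  obtain ⟨η, h, h'⟩ := Metric.uniformContinuous_iff.1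
    (CompactSpace.uniformContinuous_of_continuous hg) ε hε
  exact ⟨η, h, fun x y hxy => by simpa [Real.dist_eq] using h' hxy⟩

theorem unif_small_fin {X : Type*} [PseudoMetricSpace X] [CompactSpace X] {ι : Type*} [Finite ι]
    {g : ι → X → ℝ} (hg : ∀ i, Continuous (g i))
    {ε : ℝ} (hε : 0 < ε) : ∃ η > 0, ∀ i x y, dist x y < η → |g i x - g i y| < ε := by
  classical
  cases nonempty_fintype ι
  choose η h h' using fun i => unif_small (hg i) hε
  rcases isEmpty_or_nonempty ι with hι | hι
  · exact ⟨1, one_pos, fun i => (hι.false i).elim⟩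
  · refine ⟨Finset.univ.inf' Finset.univ_nonempty η, by simpa using h, fun i x y hxy => h' i x y ?_⟩
    exact hxy.trans_le (Finset.inf'_le _ (Finset.mem_univ i))

theorem ess_ord {X F : Type*} [Field F] [MetricSpace X] [CompactSpace X] (gs : List (X → ℝ))
    (hE : Ess F gs) (hc : ∀ g ∈ gs, Continuous g) (β : Set (Set X)) (hβ : IsOpenCover β)
    (hsep : ∀ V ∈ β, ∀ g ∈ gs, ∀ x ∈ V, ∀ y ∈ V, g x ≤ -1/2 → ¬ 1/2 ≤ g y) :
    (gs.length : ℕ∞) ≤ ord β := by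
  classical
  by_contra hcon
  push Not at hcon
  set m := gs.length with hm
  have hm0 : 0 < m := by
    rcases Nat.eq_zero_or_pos m with h | h
    · rw [h] at hcon; simp at hcon
    · exact h
  have ho : ord β ≤ ((m - 1 : ℕ) : ℕ∞) := by
    have e : (m : ℕ∞) = ((m - 1 : ℕ) : ℕ∞) + 1 := by
      have : m = (m - 1) + 1 := by omega
      exact_mod_cast this
    rw [e] at hcon
    exact (ENat.lt_add_one_iff (by simp)).1 hcon
  obtain ⟨n, ρ, hρ, hact, hsub⟩ := exists_PU_ord (m - 1) β hβ ho
  have hact' : ∀ x, (act n ρ x).card ≤ m := fun x => (hact x).trans (by omega)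
  rcases isEmpty_or_nonempty X with hX | ⟨⟨x₀⟩⟩
  · apply hE 1 one_pos
    refine ⟨fun _ => 0, fun _ _ _ _ => rfl, fun l hl hlen => ?_⟩
    match l, hlen with
    | x :: l, _ => exact (hX.false x).elim
  have hn : 0 < n := (exists_big hρ x₀).1
  have hnR : (0:ℝ) < n := by exact_mod_cast hn
  set s : ℝ := 1 / (n * (m + 1)) with hs
  have hs0 : 0 < s := by positivity
  have hsn : s * (m + 1) = 1 / n := by rw [hs]; field_simp
  let t : Fin m → ℝ := fun i => s * (i + 1)
  let G : Fin m → X → ℝ := fun i => gs.get i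
  have hG : ∀ i, G i ∈ gs := fun i => List.get_mem _ _
  let h' : Fin m → X → F := fun i x =>
    if ∃ j < n, (∃ y, 0 < ρ j y ∧ G i y ≤ -1/2) ∧ t i < ρ j x then 1 else 0
  obtain ⟨η₁, hη₁, hg1⟩ := unif_small_fin (fun i => hc _ (hG i)) (one_pos)
  obtain ⟨η₂, hη₂, hg2⟩ := unif_small_fin (ι := Fin n) (g := fun j => ρ j)
    (fun j => hρ.cont j) (ε := s / 2) (by positivity)
  set η := min η₁ η₂ with hη
  have hη0 : 0 < η := lt_min hη₁ hη₂
  let T : List ((X → F) × (X → F) × Set X) :=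
    List.ofFn (fun i : Fin m => (ind F (G i), h' i, farSet (G i)))
  have hch := change η T ?_ ?_
  · have e1 : T.map (fun t => t.1) = gs.map (ind F) := by
      simp only [T, List.map_ofFn]
      conv_rhs => rw [← List.ofFn_get gs, List.map_ofFn]
      rfl
    have e2 : T.map (fun t => t.2.1) = List.ofFn h' := by
      simp only [T, List.map_ofFn]; rfl
    have e3 : T.map (fun t => t.2.2) = gs.map farSet := by
      simp only [T, List.map_ofFn]
      conv_rhs => rw [← List.ofFn_get gs, List.map_ofFn]
      rfl
    rw [e1, e2, e3] at hch
    have e4 : T.length = gs.length := by simp [T, hm]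
    rw [e4] at hch
    apply hE η hη0
    refine hch.congr (fun l hl hlen => ?_)
    have : cup (List.ofFn h') l = 0 := by
      by_contra hne
      have hnc : ∀ i, ∃ x ∈ l, ∃ y ∈ l, h' i x ≠ h' i y := by
        intro i
        by_contra hcc
        push Not at hcc
        exact hne (cup_zero _ l (h' i) (by simp) hcc)
      match l, hlen with
      | z :: l, hlen =>
        have key : ∀ i, ∃ j < n, |ρ j z - t i| < s / 2 := by
          intro i
          obtain ⟨x, hx, y, hy, hxy⟩ := hnc i
          wlog hw : ∃ j < n, (∃ y, 0 < ρ j y ∧ G i y ≤ -1/2) ∧ t i < ρ j x generalizing x y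
          · refine this y hy x hx hxy.symm ?_
            by_contra hw'
            apply hxy
            simp only [h', if_neg hw, if_neg hw']
          have hw' : ¬ ∃ j < n, (∃ y, 0 < ρ j y ∧ G i y ≤ -1/2) ∧ t i < ρ j y := by
            intro hw'
            apply hxy
            simp only [h', if_pos hw, if_pos hw']
          obtain ⟨j, hj, hJ, htx⟩ := hw
          have hty : ρ j y ≤ t i := by
            by_contra hh
            exact hw' ⟨j, hj, hJ, not_le.1 hh⟩
          refine ⟨j, hj, ?_⟩
          have a1 := hg2 ⟨j, hj⟩ z x ((hl z (by simp) x hx).trans_le (min_le_right _ _))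
          have a2 := hg2 ⟨j, hj⟩ z y ((hl z (by simp) y hy).trans_le (min_le_right _ _))
          simp only at a1 a2
          rw [abs_lt] at *
          constructor <;> linarith
        choose J hJn hJ using key
        have hJinj : Function.Injective J := by
          intro i i' hii
          have a1 := hJ i
          have a2 := hJ i'
          rw [← hii] at a2
          rw [abs_lt] at a1 a2
          simp only [t] at a1 a2
          have b1 : (i : ℝ) < i' + 1 := by
            by_contra hh
            push Not at hh
            nlinarith
          have b2 : (i' : ℝ) < i + 1 := by
            by_contra hh
            push Not at hh
            nlinarith
          have c1 : (i : ℕ) < i' + 1 := by exact_mod_cast b1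
          have c2 : (i' : ℕ) < i + 1 := by exact_mod_cast b2
          exact Fin.ext (by omega)
        obtain ⟨_, j₀, hj₀, hbig⟩ := exists_big hρ z
        have hti : ∀ i, t i ≤ s * m := by
          intro i
          have : ((i : ℕ) : ℝ) + 1 ≤ m := by exact_mod_cast i.2
          exact mul_le_mul_of_nonneg_left this hs0.le
        have hnot : j₀ ∉ Finset.univ.image J := by
          intro hh
          obtain ⟨i, _, rfl⟩ := Finset.mem_image.1 hh
          have a1 := hJ i
          rw [abs_lt] at a1
          have := hti i
          rw [← hsn] at hbig
          nlinarith
        have hsubset : insert j₀ (Finset.univ.image J) ⊆ act n ρ z := by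
          intro j hj
          rw [mem_act hρ]
          rcases Finset.mem_insert.1 hj with rfl | hj
          · exact lt_of_lt_of_le (by positivity) hbig
          · obtain ⟨i, _, rfl⟩ := Finset.mem_image.1 hj
            have a1 := (abs_lt.1 (hJ i)).1
            have : s ≤ t i := by
              simp only [t]
              have : (0:ℝ) ≤ (i : ℕ) := by positivity
              nlinarith
            linarith
        have hcard := Finset.card_le_card hsubset
        rw [Finset.card_insert_of_notMem hnot, Finset.card_image_of_injective _ hJinj] at hcard
        have := hact' z
        simp at hcard
        omega
    rw [this, sub_zero]
  · intro τ hτ x hx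
    obtain ⟨i, rfl⟩ := (List.mem_ofFn' _ _).1 hτ
    simp only [farSet, mem_setOf_eq] at hx
    simp only [ind, h']
    rcases le_abs.1 hx with hx | hx
    · rw [if_neg (by linarith), if_neg]
      rintro ⟨j, hj, ⟨y, hy, hgy⟩, htx⟩
      obtain ⟨U, hU, hUs⟩ := hsub j hj
      have : s ≤ t i := by
        simp only [t]
        have : (0:ℝ) ≤ (i : ℕ) := by positivity
        nlinarith
      exact hsep U hU _ (hG i) y (hUs y hy) x (hUs x (by linarith)) hgy hx
    · rw [if_pos (by linarith), if_pos]
      obtain ⟨_, j₀, hj₀, hbig⟩ := exists_big hρ x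
      have ht : t i < 1 / n := by
        rw [← hsn]
        have : ((i : ℕ) : ℝ) + 1 < m + 1 := by exact_mod_cast (Nat.succ_lt_succ i.2)
        exact mul_lt_mul_of_pos_left this hs0
      exact ⟨j₀, hj₀, ⟨x, lt_of_lt_of_le (by positivity) hbig, by linarith⟩, by linarith⟩
  · intro τ hτ x hx y hy hxy
    obtain ⟨i, rfl⟩ := (List.mem_ofFn' _ _).1 hτ
    simp only [farSet, mem_setOf_eq] at hx hy
    have a := hg1 i x y (hxy.trans_le (min_le_left _ _))
    rw [abs_lt] at a
    simp only [ind]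
    rcases le_abs.1 hx with hx | hx <;> rcases le_abs.1 hy with hy | hy
    · rw [if_neg (by linarith), if_neg (by linarith)]
    · linarith
    · linarith
    · rw [if_pos (by linarith), if_pos (by linarith)]

end MeanDimPaper

namespace MeanDimPaper

section Kunneth
variable {X Y Z F : Type*} [Field F]

/-- Shuffle (Eilenberg-Zilber) evaluation. -/
def shf (mk : Y → Z → X) : (List X → F) → List Y → List Z → F
  | _, [], _ => 0
  | _, _ :: _, [] => 0
  | c, y :: ys, z :: zs =>
    (if ys.length = 0 ∧ zs.length = 0 then c [mk y z] else 0)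
      + shf mk (fun l => c (mk y z :: l)) ys (z :: zs)
      + (-1) ^ ys.length * shf mk (fun l => c (mk y z :: l)) (y :: ys) zs
  termination_by _ ys zs => ys.length + zs.length

variable (mk : Y → Z → X)

theorem shf_nil_left (c : List X → F) (zs : List Z) : shf mk c [] zs = 0 := by simp [shf]
theorem shf_nil_right (c : List X → F) (ys : List Y) : shf mk c ys [] = 0 := by
  cases ys <;> simp [shf]
theorem shf_cons (c : List X → F) (y : Y) (ys : List Y) (z : Z) (zs : List Z) :
    shf mk c (y :: ys) (z :: zs) = (if ys.length = 0 ∧ zs.length = 0 then c [mk y z] else 0)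
      + shf mk (fun l => c (mk y z :: l)) ys (z :: zs)
      + (-1) ^ ys.length * shf mk (fun l => c (mk y z :: l)) (y :: ys) zs := by
  rw [shf]

theorem shf_congr (n : ℕ) : ∀ (c c' : List X → F) (ys : List Y) (zs : List Z),
    ys.length + zs.length = n →
    (∀ l : List X, l.length + 1 = n → (∀ x ∈ l, ∃ y ∈ ys, ∃ z ∈ zs, x = mk y z) → c l = c' l) →
    shf mk c ys zs = shf mk c' ys zs := by
  induction n with
  | zero =>
    intro c c' ys zs hn _
    have : ys = [] := List.length_eq_zero_iff.1 (by omega)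
    subst this; simp [shf_nil_left]
  | succ n ih =>
    intro c c' ys zs hn h
    match ys, zs with
    | [], zs => simp [shf_nil_left]
    | y :: ys, [] => simp [shf_nil_right]
    | y :: ys, z :: zs =>
      simp only [List.length_cons] at hn
      rw [shf_cons, shf_cons]
      rw [ih (fun l => c (mk y z :: l)) (fun l => c' (mk y z :: l)) ys (z :: zs)
        (by simp; omega), ih (fun l => c (mk y z :: l)) (fun l => c' (mk y z :: l)) (y :: ys) zs
        (by simp; omega)]
      · split_ifs with hh
        · rw [h [mk y z] (by simp; omega) (by simp)]
        · rfl
      · intro l hl hx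
        apply h _ (by simp; omega)
        intro x hxl
        rcases List.mem_cons.1 hxl with rfl | hxl
        · exact ⟨y, by simp, z, by simp, rfl⟩
        · obtain ⟨y', hy', z', hz', rfl⟩ := hx x hxl
          exact ⟨y', hy', z', List.mem_cons_of_mem _ hz', rfl⟩
      · intro l hl hx
        apply h _ (by simp; omega)
        intro x hxl
        rcases List.mem_cons.1 hxl with rfl | hxl
        · exact ⟨y, by simp, z, by simp, rfl⟩
        · obtain ⟨y', hy', z', hz', rfl⟩ := hx x hxl
          exact ⟨y', List.mem_cons_of_mem _ hy', z', hz', rfl⟩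

theorem shf_mul (n : ℕ) : ∀ (k : F) (c : List X → F) (ys : List Y) (zs : List Z),
    ys.length + zs.length = n →
    shf mk (fun l => k * c l) ys zs = k * shf mk c ys zs := by
  induction n with
  | zero =>
    intro k c ys zs hn
    have : ys = [] := List.length_eq_zero_iff.1 (by omega)
    subst this; simp [shf_nil_left]
  | succ n ih =>
    intro k c ys zs hn
    match ys, zs with
    | [], zs => simp [shf_nil_left]
    | y :: ys, [] => simp [shf_nil_right]
    | y :: ys, z :: zs =>
      simp only [List.length_cons] at hn
      rw [shf_cons, shf_cons, ih k (fun l => c (mk y z :: l)) ys (z :: zs) (by simp; omega),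
        ih k (fun l => c (mk y z :: l)) (y :: ys) zs (by simp; omega)]
      split_ifs <;> ring

theorem shf_sub (n : ℕ) : ∀ (c c' : List X → F) (ys : List Y) (zs : List Z),
    ys.length + zs.length = n →
    shf mk (fun l => c l - c' l) ys zs = shf mk c ys zs - shf mk c' ys zs := by
  induction n with
  | zero =>
    intro c c' ys zs hn
    have : ys = [] := List.length_eq_zero_iff.1 (by omega)
    subst this; simp [shf_nil_left]
  | succ n ih =>
    intro c c' ys zs hn
    match ys, zs with
    | [], zs => simp [shf_nil_left]
    | y :: ys, [] => simp [shf_nil_right]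
    | y :: ys, z :: zs =>
      simp only [List.length_cons] at hn
      rw [shf_cons, shf_cons, shf_cons,
        ih (fun l => c (mk y z :: l)) (fun l => c' (mk y z :: l)) ys (z :: zs) (by simp; omega),
        ih (fun l => c (mk y z :: l)) (fun l => c' (mk y z :: l)) (y :: ys) zs (by simp; omega)]
      split_ifs <;> ring

theorem shf_head (k : F) (c c' : List X → F) (y : Y) (ys : List Y) (z : Z) (zs : List Z)
    (h : ∀ l, c (mk y z :: l) = k * c' (mk y z :: l)) :
    shf mk c (y :: ys) (z :: zs) = k * shf mk c' (y :: ys) (z :: zs) := by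
  rw [shf_cons, shf_cons]
  simp only [h]
  rw [shf_mul mk _ k (fun l => c' (mk y z :: l)) ys (z :: zs) rfl,
    shf_mul mk _ k (fun l => c' (mk y z :: l)) (y :: ys) zs rfl]
  split_ifs <;> ring

theorem dl_unit (k : F) (L : List X) :
    dl (fun l => if l.length = 0 then k else 0) L = if L.length = 1 then k else 0 := by
  match L with
  | [] => simp [dl_nil]
  | x :: L => simp [dl_cons, dl_zero]

theorem dl_sign (C : List X → F) (L : List X) :
    dl (fun l => (-1) ^ l.length * C l) L = (-1) ^ (L.length + 1) * dl C L := by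
  induction L generalizing C with
  | nil => simp [dl_nil]
  | cons x L ih =>
    rw [dl_cons, dl_cons]
    have : dl (fun l => (-1) ^ (x :: l).length * C (x :: l)) L
        = dl (fun l => (-1) ^ l.length * (- C (x :: l))) L := by
      congr 1; funext l; simp [pow_succ]
    rw [this, ih, dl_neg]
    simp only [List.length_cons, pow_succ]; ring

theorem shf_dl (n : ℕ) : ∀ (c : List X → F) (ys : List Y) (zs : List Z),
    ys.length + zs.length = n →
    shf mk (dl c) ys zs = dl (fun ys => shf mk c ys zs) ys
      + (-1) ^ (ys.length + 1) * dl (fun zs => shf mk c ys zs) zs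
      + (if ys.length = 1 ∧ zs.length = 1 then c [] else 0) := by
  induction n with
  | zero =>
    intro c ys zs hn
    have h1 : ys = [] := List.length_eq_zero_iff.1 (by omega)
    subst h1; simp [shf_nil_left, dl_zero, dl_nil]
  | succ n ih =>
    intro c ys zs hn
    match ys, zs with
    | [], zs => simp [shf_nil_left, dl_zero, dl_nil]
    | y :: ys, [] => simp [shf_nil_right, dl_zero, dl_nil]
    | y :: Y', z :: Z' =>
      simp only [List.length_cons] at hn
      set a := mk y z with ha
      set ca : List X → F := fun l => c (a :: l) with hca
      have e0 : (fun l => dl c (a :: l)) = fun l => c l - dl ca l := by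
        funext l; rw [dl_cons]
      have i1 := ih ca Y' (z :: Z') (by simp; omega)
      have i2 := ih ca (y :: Y') Z' (by simp; omega)
      have l1 : dl (fun ys => shf mk c ys (z :: Z')) (y :: Y')
          = shf mk c Y' (z :: Z') - ((if Y'.length = 1 then (if Z'.length = 0 then c [a] else 0) else 0)
            + dl (fun ys => shf mk ca ys (z :: Z')) Y'
            + (-1) ^ (Y'.length + 1) * (shf mk ca Y' Z' - dl (fun ys => shf mk ca ys Z') (y :: Y'))) := by
        rw [dl_cons]
        congr 1
        have : (fun l => shf mk c (y :: l) (z :: Z')) = fun l : List Y =>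
            ((if l.length = 0 then (if Z'.length = 0 then c [a] else 0) else 0)
            + shf mk ca l (z :: Z')) + (-1) ^ l.length * shf mk ca (y :: l) Z' := by
          funext l
          rw [shf_cons]
          congr 2
          by_cases h1 : l.length = 0 <;> by_cases h2 : Z'.length = 0 <;> simp [h1, h2, ha]
        rw [this, dl_add, dl_add, dl_unit, dl_sign, dl_cons (fun ys => shf mk ca ys Z')]
        ring
      have l2 : dl (fun zs => shf mk c (y :: Y') zs) (z :: Z')
          = shf mk c (y :: Y') Z' - ((if Z'.length = 1 then (if Y'.length = 0 then c [a] else 0) else 0)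
            + (shf mk ca Y' Z' - dl (fun zs => shf mk ca Y' zs) (z :: Z'))
            + (-1) ^ Y'.length * dl (fun zs => shf mk ca (y :: Y') zs) Z') := by
        rw [dl_cons]
        congr 1
        have : (fun l => shf mk c (y :: Y') (z :: l)) = fun l : List Z =>
            ((if l.length = 0 then (if Y'.length = 0 then c [a] else 0) else 0)
            + shf mk ca Y' (z :: l)) + (-1) ^ Y'.length * shf mk ca (y :: Y') l := by
          funext l
          rw [shf_cons]
          congr 2
          by_cases h1 : l.length = 0 <;> by_cases h2 : Y'.length = 0 <;> simp [h1, h2, ha]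
        rw [this, dl_add, dl_add, dl_unit, dl_mul, dl_cons (fun zs => shf mk ca Y' zs)]
        ring
      rw [l1, l2, shf_cons, e0, shf_sub mk _ c (dl ca) Y' (z :: Z') rfl,
        shf_sub mk _ c (dl ca) (y :: Y') Z' rfl, i1, i2]
      have e1 : dl c [mk y z] = c [] := by simp [dl_cons, dl_nil]
      rw [e1]
      have hε : ((-1 : F) ^ Y'.length) * ((-1) ^ Y'.length) = 1 := by
        rw [← mul_pow]; simp
      have hca1 : ca [] = c [a] := rfl
      rw [hca1]
      simp only [List.length_cons, pow_succ]
      generalize hε' : ((-1 : F) ^ Y'.length) = ε at *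
      have key : ∀ p q : F, ε * (ε * q) = q := by intro p q; rw [← mul_assoc, hε, one_mul]
      by_cases h1 : Y'.length = 0
      · have : ε = 1 := by rw [← hε', h1]; simp
        subst this
        by_cases h2 : Z'.length = 0
        · simp [h1, h2]; ring
        · by_cases h3 : Z'.length = 1
          · simp [h1, h3]; ring
          · simp [h1, h2, h3]; ring
      · by_cases h2 : Z'.length = 0
        · by_cases h3 : Y'.length = 1
          · simp [h2, h3]; linear_combination (0 : F) * hε
          · simp [h1, h2, h3]; ring
        · simp [h1, h2]; ring

theorem shf_cup (pa : X → Y) (pb : X → Z) (hpa : ∀ y z, pa (mk y z) = y) (hpb : ∀ y z, pb (mk y z) = z)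
    (hs' : List (Z → F)) (hs : List (Y → F)) (ys : List Y) (zs : List Z)
    (hy : ys.length = hs.length + 1) (hz : zs.length = hs'.length + 1) :
    shf mk (cup (hs.map (fun h => h ∘ pa) ++ hs'.map (fun h => h ∘ pb))) ys zs
      = cup hs ys * cup hs' zs := by
  induction hs generalizing ys with
  | nil =>
    match ys, hy with
    | [y], _ =>
      simp only [List.map_nil, List.nil_append]
      have : cup ([] : List (Y → F)) [y] = 1 := by simp [cup]
      rw [this, one_mul]
      induction hs' generalizing zs with
      | nil =>
        match zs, hz with
        | [z], _ => simp [shf_cons, shf_nil_left, shf_nil_right, cup]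
      | cons h hs' ih =>
        match zs, hz with
        | z :: z' :: zs, hz =>
          rw [shf_cons, shf_nil_left, List.map_cons, cup,
            shf_head mk (h z' - h z) _ (cup (hs'.map (fun h => h ∘ pb))), ih (z' :: zs)
              (by simpa using hz)]
          · simp [cup, cupOne]
          · intro l
            simp [cupOne, hpb]
  | cons h hs ih =>
    match ys, hy, zs, hz with
    | y :: y' :: ys, hy, z :: zs, hz =>
      rw [shf_cons, List.map_cons, List.cons_append, cup,
        shf_head mk (h y' - h y) _ (cup (hs.map (fun h => h ∘ pa) ++ hs'.map (fun h => h ∘ pb))),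
        ih (y' :: ys) (by simpa using hy)]
      · have : shf mk (fun l => cupOne (h ∘ pa)
            (cup (hs.map (fun h => h ∘ pa) ++ hs'.map (fun h => h ∘ pb))) (mk y z :: l))
              (y :: y' :: ys) zs = 0 := by
          match zs with
          | [] => simp [shf_nil_right]
          | z' :: zs =>
            rw [shf_head mk 0 _ (fun _ => 0)]
            · simp
            · intro l; simp [cupOne, hpa]
        rw [this]
        simp [cup, cupOne, mul_assoc]
      · intro l; simp [cupOne, hpa]

theorem ess_prod [PseudoMetricSpace X] [PseudoMetricSpace Y] [PseudoMetricSpace Z]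
    (pa : X → Y) (pb : X → Z) (hpa : ∀ y z, pa (mk y z) = y) (hpb : ∀ y z, pb (mk y z) = z)
    (hmk : ∀ η > 0, ∃ η' > 0, ∀ y y' z z', dist y y' < η' → dist z z' < η' →
      dist (mk y z) (mk y' z') < η)
    (gs : List (Y → ℝ)) (gs' : List (Z → ℝ)) (hne : gs ≠ []) (h : Ess F gs) (h' : Ess F gs') :
    Ess F (gs.map (fun g => g ∘ pa) ++ gs'.map (fun g => g ∘ pb)) := by
  intro η hη
  rintro ⟨c, hc1, hc2⟩
  obtain ⟨η', hη', hmk⟩ := hmk η hη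
  have hsm : ∀ (ys : List Y) (zs : List Z) (l : List X), Small η' ys → Small η' zs →
      (∀ x ∈ l, ∃ y ∈ ys, ∃ z ∈ zs, x = mk y z) → Small η l := by
    intro ys zs l hy hz hl x hx x' hx'
    obtain ⟨y, h1, z, h2, rfl⟩ := hl x hx
    obtain ⟨y', h1', z', h2', rfl⟩ := hl x' hx'
    exact hmk _ _ _ _ (hy _ h1 _ h1') (hz _ h2 _ h2')
  set m := gs.length with hm
  set m' := gs'.length with hm'
  have hm0 : 0 < m := List.length_pos_iff.2 hne
  let N : Submodule F (List Z → F) :=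
    { carrier := {w | InN (gs'.map farSet) m' η' w}
      add_mem' := fun h1 h2 => InN.add h1 h2
      zero_mem' := InN.zero
      smul_mem' := fun k w hw => InN.smul hw k }
  have hφ : cup (gs'.map (ind F)) ∉ N := h' η' hη'
  obtain ⟨lam, hlam1, hlamN⟩ := Submodule.exists_le_ker_of_notMem hφ
  have hN0 : ∀ w : List Z → F, InN (gs'.map farSet) m' η' w → lam w = 0 := fun w hw => hlamN hw
  set φ' := cup (gs'.map (ind F)) with hφ'
  have hcong : ∀ w w' : List Z → F, (∀ l, Small η' l → l.length = m' + 1 → w l = w' l) →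
      lam w = lam w' := by
    intro w w' hw
    have : lam (w - w') = 0 := by
      apply hN0
      exact InN.zero.congr (fun l hl hlen => by simp [hw l hl hlen])
    rwa [map_sub, sub_eq_zero] at this
  have hlamdl : ∀ (ys : List Y) (C : List Y → List Z → F),
      lam (fun zs => dl (fun ys => C ys zs) ys) = dl (fun ys => lam (C ys)) ys := by
    intro ys
    induction ys with
    | nil => intro C; simp only [dl_nil]; exact map_zero lam
    | cons y ys ih =>
      intro C
      simp only [dl_cons]
      rw [← ih (fun l => C (y :: l)), ← map_sub]
      rfl
  apply h η' hη'
  refine ⟨fun ys => (lam φ')⁻¹ * lam (fun zs => shf mk c ys zs), ?_, ?_⟩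
  · rintro ys hys hlen ⟨E, hE, hyE⟩
    have : lam (fun zs => shf mk c ys zs) = lam 0 := by
      apply hcong
      intro zs hzs hzlen
      have := shf_congr mk _ c (fun _ => 0) ys zs rfl ?_
      · rw [this]
        have := shf_mul mk _ (0:F) (fun _ => 0) ys zs rfl
        simpa using this
      · intro l hl hx
        obtain ⟨g, hg, rfl⟩ := List.mem_map.1 hE
        apply hc1 l (hsm ys zs l hys hzs hx)
        · simp; omega
        · refine ⟨farSet (g ∘ pa), ?_, ?_⟩
          · rw [List.map_append, List.mem_append]
            left
            exact List.mem_map.2 ⟨_, List.mem_map.2 ⟨g, hg, rfl⟩, rfl⟩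
          · intro x hxl
            obtain ⟨y, hy, z, hz, rfl⟩ := hx x hxl
            have := hyE y hy
            simpa [farSet, hpa] using this
    simp only [this, map_zero, mul_zero]
  · intro ys hys hlen
    have hlen' : ys.length = m + 1 := hlen
    rw [dl_mul, ← hlamdl]
    have hA : lam (fun zs => cup (gs.map (ind F)) ys * φ' zs)
        = lam (fun zs => dl (fun ys => shf mk c ys zs) ys
          + (-1) ^ (ys.length + 1) * dl (fun zs => shf mk c ys zs) zs) := by
      apply hcong
      intro zs hzs hzlen
      have e1 := shf_cup (F := F) mk pa pb hpa hpb (gs'.map (ind F)) (gs.map (ind F)) ys zs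
        (by simp [hlen', hm]) (by simp [hzlen, hm'])
      rw [hφ', ← e1]
      have e2 := shf_dl mk _ c ys zs rfl
      rw [if_neg (by omega), add_zero] at e2
      rw [← e2]
      apply shf_congr mk _ _ _ ys zs rfl
      intro l hl hx
      rw [← hc2 l (hsm ys zs l hys hzs hx) (by simp; omega)]
      congr 2
      simp only [List.map_append, List.map_map]
      rfl
    have hB : lam (fun zs => dl (fun zs => shf mk c ys zs) zs) = 0 := by
      apply hN0
      refine ⟨fun zs => shf mk c ys zs, ?_, fun _ _ _ => rfl⟩
      rintro zs hzs hzlen ⟨E, hE, hzE⟩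
      have := shf_congr mk _ c (fun _ => 0) ys zs rfl ?_
      · simp only
        rw [this]
        have := shf_mul mk _ (0:F) (fun _ => 0) ys zs rfl
        simpa using this
      · intro l hl hx
        obtain ⟨g, hg, rfl⟩ := List.mem_map.1 hE
        apply hc1 l (hsm ys zs l hys hzs hx)
        · simp; omega
        · refine ⟨farSet (g ∘ pb), ?_, ?_⟩
          · rw [List.map_append, List.mem_append]
            right
            exact List.mem_map.2 ⟨_, List.mem_map.2 ⟨g, hg, rfl⟩, rfl⟩
          · intro x hxl
            obtain ⟨y, hy, z, hz, rfl⟩ := hx x hxl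
            have := hzE z hz
            simpa [farSet, hpb] using this
    have hC : lam (fun zs => cup (gs.map (ind F)) ys * φ' zs) = cup (gs.map (ind F)) ys * lam φ' := by
      rw [← smul_eq_mul, ← map_smul]; rfl
    have hD : lam (fun zs => dl (fun ys => shf mk c ys zs) ys
          + (-1) ^ (ys.length + 1) * dl (fun zs => shf mk c ys zs) zs)
        = lam (fun zs => dl (fun ys => shf mk c ys zs) ys)
          + (-1) ^ (ys.length + 1) * lam (fun zs => dl (fun zs => shf mk c ys zs) zs) := by
      rw [← smul_eq_mul, ← map_smul, ← map_add]; rfl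
    rw [hD, hB, hC, mul_zero, add_zero] at hA
    rw [← hA]
    field_simp

end Kunneth
end MeanDimPaper

namespace MeanDimPaper

section Transfer
variable {X Y F : Type*} [Field F]

theorem dl_map (f : Y → X) (c : List X → F) (l : List Y) :
    dl c (l.map f) = dl (fun l => c (l.map f)) l := by
  induction l generalizing c with
  | nil => simp [dl_nil]
  | cons y l ih => simp only [List.map_cons, dl_cons, ih]

theorem cup_map (f : Y → X) (a : X → Y) (ha : ∀ y, a (f y) = y) (hs : List (Y → F)) (l : List Y) :
    cup (hs.map (fun h => h ∘ a)) (l.map f) = cup hs l := by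
  induction hs generalizing l with
  | nil => simp [cup]
  | cons h hs ih =>
    match l with
    | [] => simp [cup, cupOne]
    | [_] => simp [cup, cupOne]
    | y :: z :: l =>
      have := ih (z :: l)
      simp only [List.map_cons] at this ⊢
      simp only [cup, cupOne, Function.comp, ha]
      rw [← this]

theorem ess_transfer [PseudoMetricSpace X] [PseudoMetricSpace Y] (f : Y → X) (a : X → Y)
    (ha : ∀ y, a (f y) = y) (hf : ∀ η > 0, ∃ η' > 0, ∀ y y', dist y y' < η' → dist (f y) (f y') < η)
    (gs : List (Y → ℝ)) (h : Ess F gs) : Ess F (gs.map (fun g => g ∘ a)) := by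
  rintro η hη ⟨c, hc1, hc2⟩
  obtain ⟨η', hη', hf⟩ := hf η hη
  have hs : ∀ l : List Y, Small η' l → Small η (l.map f) := by
    intro l hl x hx y hy
    obtain ⟨x, hx', rfl⟩ := List.mem_map.1 hx
    obtain ⟨y, hy', rfl⟩ := List.mem_map.1 hy
    exact hf _ _ (hl _ hx' _ hy')
  apply h η' hη'
  refine ⟨fun l => c (l.map f), ?_, ?_⟩
  · rintro l hl hlen ⟨E, hE, hlE⟩
    obtain ⟨g, hg, rfl⟩ := List.mem_map.1 hE
    apply hc1 _ (hs l hl) (by simpa using hlen)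
    refine ⟨farSet (g ∘ a), List.mem_map.2 ⟨_, List.mem_map.2 ⟨g, hg, rfl⟩, rfl⟩, ?_⟩
    intro x hx
    obtain ⟨x, hx', rfl⟩ := List.mem_map.1 hx
    simpa [farSet, ha] using hlE x hx'
  · intro l hl hlen
    rw [← dl_map, ← hc2 _ (hs l hl) (by simpa using hlen), ← cup_map f a ha]
    congr 1
    simp only [List.map_map]; rfl

end Transfer

theorem ess_pow {K F : Type*} [Field F] [PseudoMetricSpace K] (gs : List (K → ℝ)) (hne : gs ≠ [])
    (h : Ess F gs) (n : ℕ) : ∃ gsn : List ((Fin (n + 1) → K) → ℝ), gsn.length = (n + 1) * gs.length ∧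
      (∀ G ∈ gsn, ∃ g ∈ gs, ∃ i, G = fun u => g (u i)) ∧ Ess F gsn := by
  induction n with
  | zero =>
    refine ⟨gs.map (fun g => g ∘ (fun u : Fin 1 → K => u 0)), by simp, ?_, ?_⟩
    · intro G hG
      obtain ⟨g, hg, rfl⟩ := List.mem_map.1 hG
      exact ⟨g, hg, 0, rfl⟩
    · refine ess_transfer (fun y _ => y) _ (fun y => rfl) (fun η hη => ⟨η, hη, fun y y' hy => ?_⟩) gs h
      rw [dist_pi_lt_iff hη]; intro _; exact hy
  | succ n ih =>
    obtain ⟨gsn, h1, h2, h3⟩ := ih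
    refine ⟨gs.map (fun g => g ∘ (fun u : Fin (n + 2) → K => u 0))
      ++ gsn.map (fun g => g ∘ (fun u : Fin (n + 2) → K => Fin.tail u)), ?_, ?_, ?_⟩
    · simp [h1]; ring
    · intro G hG
      rcases List.mem_append.1 hG with hG | hG
      · obtain ⟨g, hg, rfl⟩ := List.mem_map.1 hG
        exact ⟨g, hg, 0, rfl⟩
      · obtain ⟨G', hG', rfl⟩ := List.mem_map.1 hG
        obtain ⟨g, hg, i, rfl⟩ := h2 G' hG'
        exact ⟨g, hg, i.succ, rfl⟩
    · refine ess_prod (fun (y : K) (z : Fin (n + 1) → K) => (Fin.cons y z : Fin (n + 2) → K)) _ _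
        (fun y z => by simp) (fun y z => by simp) (fun η hη => ⟨η, hη, fun y y' z z' hy hz => ?_⟩)
        gs gsn hne h h3
      rw [dist_pi_lt_iff hη] at hz ⊢
      intro i
      refine Fin.cases ?_ (fun i => ?_) i
      · simpa using hy
      · simpa using hz i

section Metric
variable {X : Type*} [TopologicalSpace X]

theorem IsCompatMetric.continuous {d : X → X → ℝ} (hd : IsCompatMetric d) :
    Continuous (fun p : X × X => d p.1 p.2) := by
  let _ : MetricSpace X := MetricSpace.ofDistTopology d hd.refl hd.symm hd.triangle hd.isOpen_iff
    hd.eq_of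
  exact (continuous_dist : Continuous (fun p : X × X => dist p.1 p.2))

theorem IsCompatMetric.nonneg {d : X → X → ℝ} (hd : IsCompatMetric d) (x y : X) : 0 ≤ d x y := by
  have h1 := hd.triangle x y x
  rw [hd.refl, hd.symm y x] at h1
  linarith

theorem IsCompatMetric.bdd [CompactSpace X] {d : X → X → ℝ} (hd : IsCompatMetric d) :
    ∃ C, 0 ≤ C ∧ ∀ x y, d x y ≤ C := by
  obtain ⟨C, hC⟩ := (isCompact_range hd.continuous).bddAbove
  exact ⟨max C 0, le_max_right _ _, fun x y => (hC ⟨(x, y), rfl⟩).trans (le_max_left _ _)⟩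

theorem IsCompatMetric.unif [CompactSpace X] {d : X → X → ℝ} (hd : IsCompatMetric d) {g : X → ℝ}
    (hg : Continuous g) : ∃ ε > 0, ∀ x y, d x y < ε → |g x - g y| < 1 := by
  let _ : MetricSpace X := MetricSpace.ofDistTopology d hd.refl hd.symm hd.triangle hd.isOpen_iff
    hd.eq_of
  exact unif_small hg one_pos

theorem le_dynDist [CompactSpace X] {d : X → X → ℝ} (hd : IsCompatMetric d) (T : X → X) {n i : ℕ}
    (hi : i < n) (x y : X) : d (T^[i] x) (T^[i] y) ≤ dynDist d T n x y := by
  obtain ⟨C, _, hC⟩ := hd.bdd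
  exact le_csSup ⟨C, by rintro _ ⟨i, _, rfl⟩; exact hC _ _⟩ ⟨i, hi, rfl⟩

theorem dynDist_le {d : X → X → ℝ} (T : X → X) {n : ℕ} (x y : X) {C : ℝ} (hC : 0 ≤ C)
    (h : ∀ i < n, d (T^[i] x) (T^[i] y) ≤ C) : dynDist d T n x y ≤ C := by
  refine Real.sSup_le ?_ hC
  rintro _ ⟨i, hi, rfl⟩; exact h i hi

theorem dist_lt_of_mesh {d : X → X → ℝ} {C : ℝ} (hC0 : 0 ≤ C) (hC : ∀ x y, d x y ≤ C)
    {α : Set (Set X)} {ε : ℝ} (h : mesh d α < ε) {U : Set X} (hU : U ∈ α) {x y : X} (hx : x ∈ U)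
    (hy : y ∈ U) : d x y < ε := by
  refine lt_of_le_of_lt ?_ h
  have h1 : ∀ V : Set X, diamD d V ≤ C := fun V => by
    refine Real.sSup_le ?_ hC0
    rintro _ ⟨x, _, y, _, rfl⟩; exact hC _ _
  refine le_trans ?_ (le_csSup ⟨C, by rintro _ ⟨V, _, rfl⟩; exact h1 V⟩ ⟨U, hU, rfl⟩)
  exact le_csSup ⟨C, by rintro _ ⟨x, _, y, _, rfl⟩; exact hC _ _⟩ ⟨x, hx, y, hy, rfl⟩

theorem mesh_le {d : X → X → ℝ} {C : ℝ} (hC0 : 0 ≤ C) {α : Set (Set X)}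
    (h : ∀ U ∈ α, ∀ x ∈ U, ∀ y ∈ U, d x y ≤ C) : mesh d α ≤ C := by
  refine Real.sSup_le ?_ hC0
  rintro _ ⟨U, hU, rfl⟩
  refine Real.sSup_le ?_ hC0
  rintro _ ⟨x, hx, y, hy, rfl⟩
  exact h U hU x hx y hy

theorem ord_preimage_le {Y : Type*} [TopologicalSpace Y] (f : Y → X) (β : Set (Set X)) :
    ord ((fun V => f ⁻¹' V) '' β) ≤ ord β := by
  rw [ord]
  refine iSup₂_le ?_
  rintro n ⟨F, hinj, hmem, y, hy⟩
  choose G hG hGF using hmem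
  refine le_ord β n G ?_ hG (f y) ?_
  · intro i j hij
    apply hinj
    rw [← hGF i, ← hGF j, hij]
  · intro i
    have := mem_iInter.1 hy i
    rw [← hGF i] at this
    exact this

theorem mdim_lower [CompactSpace X] {K F : Type*} [Field F] [MetricSpace K] [CompactSpace K]
    (d : X → X → ℝ) (hd : IsCompatMetric d) (T : X → X) (ev : X → K) (hev : Continuous ev)
    (iota : ∀ N : ℕ, (Fin N → K) → X) (hiota : ∀ N, Continuous (iota N))
    (hev2 : ∀ N u (i : Fin N), ev (T^[i] (iota N u)) = u i)
    (gs : List (K → ℝ)) (hne : gs ≠ []) (hc : ∀ g ∈ gs, Continuous g) (h : Ess F gs) :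
    (gs.length : ℝ≥0∞) ≤ mdim T d := by
  obtain ⟨ε, hε, hg⟩ : ∃ ε > 0, ∀ g ∈ gs, ∀ x y, d x y < ε → |g (ev x) - g (ev y)| < 1 := by
    clear h hne
    induction gs with
    | nil => exact ⟨1, one_pos, by simp⟩
    | cons g gs ih =>
      obtain ⟨ε, hε, h1⟩ := ih (fun g hg => hc g (List.mem_cons_of_mem _ hg))
      obtain ⟨ε', hε', h2⟩ := hd.unif ((hc g List.mem_cons_self).comp hev)
      refine ⟨min ε ε', lt_min hε hε', fun g' hg' x y hxy => ?_⟩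
      rcases List.mem_cons.1 hg' with rfl | hg'
      · exact h2 x y (hxy.trans_le (min_le_right _ _))
      · exact h1 g' hg' x y (hxy.trans_le (min_le_left _ _))
  unfold mdim
  refine le_trans ?_ (le_iSup₂ (f := fun (ε : ℝ) (_ : 0 < ε) =>
    Filter.liminf (fun n : ℕ => (widim ε (dynDist d T n) : ℝ≥0∞) / (n : ℝ≥0∞)) Filter.atTop) ε hε)
  refine le_liminf_of_le (by isBoundedDefault) ?_
  filter_upwards [eventually_ge_atTop 1] with n hn
  obtain ⟨n, rfl⟩ : ∃ k, n = k + 1 := ⟨n - 1, by omega⟩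
  rw [ENNReal.le_div_iff_mul_le (by left; simp) (by left; simp)]
  obtain ⟨gsn, h1, h2, h3⟩ := ess_pow gs hne h n
  have key : ((gsn.length : ℕ∞)) ≤ widim ε (dynDist d T (n + 1)) := by
    unfold widim covD
    refine le_iInf₂ ?_
    rintro α ⟨hα, hmesh⟩
    refine le_iInf₂ ?_
    rintro β ⟨hβ, hr⟩
    refine le_trans ?_ (ord_preimage_le (iota (n + 1)) β)
    refine ess_ord gsn h3 ?_ _ ?_ ?_
    · intro G hG
      obtain ⟨g, hg, i, rfl⟩ := h2 G hG
      exact (hc g hg).comp (continuous_apply i)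
    · constructor
      · rintro _ ⟨V, hV, rfl⟩
        exact (hβ.1 V hV).preimage (hiota _)
      · rw [eq_univ_iff_forall]
        intro u
        obtain ⟨V, hV, hu⟩ := mem_sUnion.1 (hβ.2 ▸ mem_univ (iota (n + 1) u))
        exact ⟨_, ⟨V, hV, rfl⟩, hu⟩
    · rintro _ ⟨V, hV, rfl⟩ G hG x hx y hy hGx hGy
      obtain ⟨g, hgm, i, rfl⟩ := h2 G hG
      obtain ⟨U, hU, hVU⟩ := hr V hV
      obtain ⟨C, hC0, hC⟩ := hd.bdd
      have a1 := dist_lt_of_mesh hC0 (fun x y => dynDist_le T x y hC0 (fun i _ => hC _ _)) hmesh hU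
        (hVU hx) (hVU hy)
      have a2 := (le_dynDist hd T i.2 (iota (n + 1) x) (iota (n + 1) y)).trans_lt a1
      have a3 := hg g hgm _ _ a2
      rw [hev2, hev2, abs_lt] at a3
      linarith
  have e : (gs.length : ℝ≥0∞) * ((n + 1 : ℕ) : ℝ≥0∞) = (((gsn.length : ℕ∞)) : ℝ≥0∞) := by
    rw [h1]; push_cast; ring
  rw [e]
  exact_mod_cast key

theorem mdim_upper [CompactSpace X] {K : Type*} [MetricSpace K] [CompactSpace K]
    (d : X → X → ℝ) (hd : IsCompatMetric d) (T : X → X) (k : ℕ) (hk : topDim K ≤ k)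
    (π : ℤ → X → K) (hπ : ∀ j, Continuous (π j)) (hinj : ∀ x y, (∀ j, π j x = π j y) → x = y)
    (hT : ∀ j x, π j (T x) = π (j + 1) x) : mdim T d ≤ k := by
  unfold mdim
  refine iSup₂_le fun ε hε => ?_
  have hTi : ∀ (i : ℕ) j x, π j (T^[i] x) = π (j + i) x := by
    intro i
    induction i with
    | zero => intro j x; simp
    | succ i ih =>
      intro j x
      rw [Function.iterate_succ_apply, ih, hT]
      congr 1; push_cast; ring
  obtain ⟨m, hm⟩ : ∃ m : ℕ, ∀ x y, (∀ j : ℤ, |j| ≤ m → dist (π j x) (π j y) ≤ 1 / ((m : ℝ) + 1)) →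
      d x y < ε / 2 := by
    by_contra hcon
    push Not at hcon
    let C : ℕ → Set (X × X) := fun m => {p | ε / 2 ≤ d p.1 p.2} ∩
      ⋂ j : ℤ, ⋂ (_ : |j| ≤ m), {p | dist (π j p.1) (π j p.2) ≤ 1 / ((m : ℝ) + 1)}
    have hclosed : ∀ m, IsClosed (C m) := by
      intro m
      refine (isClosed_le continuous_const hd.continuous).inter ?_
      refine isClosed_iInter fun j => isClosed_iInter fun _ => ?_
      exact isClosed_le (((hπ j).comp continuous_fst).dist ((hπ j).comp continuous_snd))
        continuous_const
    have hne := IsCompact.nonempty_iInter_of_sequence_nonempty_isCompact_isClosed C ?_ ?_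
      (hclosed 0).isCompact hclosed
    · obtain ⟨⟨x, y⟩, hp⟩ := hne
      rw [mem_iInter] at hp
      have hxy : x = y := by
        apply hinj
        intro j
        rw [← dist_le_zero]
        have : Tendsto (fun m : ℕ => 1 / ((m : ℝ) + 1)) atTop (nhds 0) :=
          tendsto_one_div_add_atTop_nhds_zero_nat
        refine ge_of_tendsto this ?_
        filter_upwards [eventually_ge_atTop j.natAbs] with m hm
        have := (hp m).2
        simp only [mem_iInter] at this
        exact this j (by rw [abs_le]; omega)
      have := (hp 0).1
      rw [hxy] at this
      simp only [mem_setOf_eq, hd.refl] at this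
      linarith
    · intro m p hp
      refine ⟨hp.1, ?_⟩
      have := hp.2
      simp only [mem_iInter] at this ⊢
      intro j hj
      have h2 := this j (by push_cast; omega)
      simp only [mem_setOf_eq] at h2 ⊢
      refine h2.trans ?_
      apply one_div_le_one_div_of_le (by positivity)
      push_cast; linarith
    · intro m
      obtain ⟨x, y, h1, h2⟩ := hcon m
      refine ⟨(x, y), h2, ?_⟩
      simp only [mem_iInter]
      exact h1
  set δ : ℝ := 1 / ((m : ℝ) + 1) with hδ
  have hδ0 : 0 < δ := by positivity
  obtain ⟨n, ρ, hρ, hact, hsub⟩ := exists_PU k hk (range fun x : K => Metric.ball x (δ / 2)) (by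
    constructor
    · rintro _ ⟨x, rfl⟩; exact Metric.isOpen_ball
    · rw [eq_univ_iff_forall]
      intro x
      exact ⟨_, ⟨x, rfl⟩, Metric.mem_ball_self (by positivity)⟩)
  have hbound : ∀ N : ℕ, widim ε (dynDist d T N) ≤ (((N + 2 * m + 1) * k : ℕ) : ℕ∞) := by
    intro N
    obtain ⟨β, hβ, hord, hW⟩ := staircase (X := X) (A := Fin (N + 2 * m + 1)) (fun _ => n)
      (fun a j x => ρ j (π ((a : ℕ) - m : ℤ) x)) (fun a =>
        ⟨fun j => (hρ.cont j).comp (hπ _), fun j x => hρ.nonneg _ _, fun j x hj => hρ.zero _ _ hj,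
          fun x => hρ.sum _⟩) ((N + 2 * m + 1) * k) (fun x => by
        refine (Finset.sum_le_card_nsmul _ _ k (fun a _ => ?_)).trans (by simp)
        have := hact (π ((a : ℕ) - m : ℤ) x)
        have e : act n (fun j x => ρ j (π ((a : ℕ) - m : ℤ) x)) x
          = act n ρ (π ((a : ℕ) - m : ℤ) x) := rfl
        rw [e]; omega)
    have hmesh : mesh (dynDist d T N) β < ε := by
      refine lt_of_le_of_lt (mesh_le (C := ε / 2) (by positivity) ?_) (by linarith)
      intro W hWβ x hx y hy
      obtain ⟨i, hi⟩ := hW W hWβ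
      refine dynDist_le T x y (by positivity) (fun q hq => (hm _ _ ?_).le)
      intro j hj
      rw [hTi, hTi]
      rw [abs_le] at hj
      obtain ⟨a, ha⟩ : ∃ a : Fin (N + 2 * m + 1), ((a : ℕ) : ℤ) - m = j + q :=
        ⟨⟨(j + q + m).toNat, by omega⟩, by simp; omega⟩
      have p1 := hi a x hx
      have p2 := hi a y hy
      simp only [ha] at p1 p2
      by_cases hn : i a < n
      · obtain ⟨U, ⟨z, rfl⟩, hz⟩ := hsub _ hn
        have q1 := hz _ p1
        have q2 := hz _ p2
        rw [Metric.mem_ball] at q1 q2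
        have := dist_triangle_right (π (j + q) x) (π (j + q) y) z
        linarith
      · have := hρ.zero (i a) (π (j + q) x) (by omega)
        linarith
    refine le_trans ?_ ((covD_le β β hβ (fun V hV => ⟨V, hV, subset_rfl⟩)).trans hord)
    unfold widim
    exact iInf₂_le (f := fun (α : Set (Set X))
      (_ : α ∈ {α : Set (Set X) | IsOpenCover α ∧ mesh (dynDist d T N) α < ε}) => covD α) β
      ⟨hβ, hmesh⟩
  have hlim : Tendsto (fun N : ℕ => (k : ℝ≥0∞) + ((2 * m + 1) * k : ℕ) * ((N : ℝ≥0∞)⁻¹)) atTop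
      (nhds k) := by
    have := ENNReal.Tendsto.const_mul (a := (((2 * m + 1) * k : ℕ) : ℝ≥0∞))
      ENNReal.tendsto_inv_nat_nhds_zero (Or.inr (ENNReal.natCast_ne_top _))
    simpa using tendsto_const_nhds.add this
  rw [← hlim.liminf_eq]
  refine liminf_le_liminf ?_ (by isBoundedDefault) (by isBoundedDefault)
  filter_upwards [eventually_ge_atTop 1] with N hN
  have hN0 : (N : ℝ≥0∞) ≠ 0 := by simp; omega
  have hNt : (N : ℝ≥0∞) ≠ ⊤ := by simp
  rw [div_eq_mul_inv]
  have h1 : (widim ε (dynDist d T N) : ℝ≥0∞) ≤ ((N + 2 * m + 1) * k : ℕ) := by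
    have := hbound N
    have h2 : (widim ε (dynDist d T N) : ℝ≥0∞) ≤ ((((N + 2 * m + 1) * k : ℕ) : ℕ∞) : ℝ≥0∞) := by
      exact_mod_cast this
    simpa using h2
  calc (widim ε (dynDist d T N) : ℝ≥0∞) * (N : ℝ≥0∞)⁻¹
      ≤ ((N + 2 * m + 1) * k : ℕ) * (N : ℝ≥0∞)⁻¹ := by gcongr
    _ = k * ((N : ℝ≥0∞) * (N : ℝ≥0∞)⁻¹) + ((2 * m + 1) * k : ℕ) * (N : ℝ≥0∞)⁻¹ := by
      push_cast; ring
    _ = _ := by rw [ENNReal.mul_inv_cancel hN0 hNt, mul_one]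

end Metric
end MeanDimPaper

namespace MeanDimPaper

theorem topDim_zero {Q : Type*} [MetricSpace Q] [CompactSpace Q] [TotallyDisconnectedSpace Q] :
    topDim Q ≤ 0 := by
  refine topDim_le 0 (fun α hα => ?_)
  let U : α → TopologicalSpace.Opens Q := fun V => ⟨V.1, hα.1 V.1 V.2⟩
  have hU : TopologicalSpace.IsOpenCover U := by
    apply TopologicalSpace.IsOpenCover.of_sets
    rw [← hα.2, sUnion_eq_iUnion]
  obtain ⟨n, W, h1, h2, h3⟩ := hU.exists_finite_nonempty_disjoint_clopen_cover
  refine (covD_le α (range fun j => (W j : Set Q)) ⟨?_, ?_⟩ ?_).trans ?_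
  · rintro _ ⟨j, rfl⟩; exact (W j).isClopen.isOpen
  · rw [sUnion_range]; exact univ_subset_iff.1 h2
  · rintro _ ⟨j, rfl⟩
    obtain ⟨i, hi⟩ := (h1 j).2
    exact ⟨i.1, i.2, hi⟩
  · apply ord_le_of _ 0
    intro m f hinj hf x hx
    by_contra hm
    have hne : (0 : Fin (m + 1)) ≠ ⟨1, by omega⟩ := by
      intro h; simp [Fin.ext_iff] at h
    obtain ⟨i, hi⟩ := hf 0
    obtain ⟨j, hj⟩ := hf ⟨1, by omega⟩
    have hij : i ≠ j := by
      rintro rfl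
      exact hne (hinj (by rw [← hi, ← hj]))
    have hd := h3 hij
    have hd' : Disjoint (W i : Set Q) (W j : Set Q) := by
      have := (TopologicalSpace.Clopens.coe_disjoint (s := W i) (t := W j)).2 hd
      exact this
    have a1 : x ∈ (W i : Set Q) := by have := hx 0; rw [← hi] at this; exact this
    have a2 : x ∈ (W j : Set Q) := by have := hx ⟨1, by omega⟩; rw [← hj] at this; exact this
    exact Set.disjoint_left.1 hd' a1 a2

theorem ess_one {Q F : Type*} [Field F] [MetricSpace Q] [CompactSpace Q] (hQ : topDim Q ≠ 0) :
    ∃ g : Q → ℝ, Continuous g ∧ Ess F [g] := by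
  have : ¬ TotallyDisconnectedSpace Q := fun h => hQ (le_antisymm topDim_zero (zero_le))
  rw [totallyDisconnectedSpace_iff_connectedComponent_subsingleton] at this
  push Not at this
  obtain ⟨x₀, x, hx, y, hy, hxy⟩ := this
  have hyx : y ∈ connectedComponent x := by rw [connectedComponent_eq hx] at hy; exact hy
  have hD : 0 < dist x y := dist_pos.2 hxy
  refine ⟨fun t => dist x t / dist x y - 1 / 2, by fun_prop, ?_⟩
  rintro η hη ⟨c, hc1, hc2⟩
  set g : Q → ℝ := fun t => dist x t / dist x y - 1 / 2 with hg
  have hgx : g x = -1/2 := by simp [hg]; norm_num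
  have hgy : g y = 1/2 := by simp only [hg]; rw [div_self hD.ne']; norm_num
  have hc0 : ∀ t, t ∈ farSet g → c [t] = 0 := by
    intro t ht
    apply hc1 [t]
    · intro a ha b hb
      simp at ha hb
      subst ha; subst hb; simpa using hη
    · simp
    · exact ⟨farSet g, by simp, by simpa using ht⟩
  have hstep : ∀ s t, dist s t < η → ind F g t - c [t] = ind F g s - c [s] := by
    intro s t hst
    have := hc2 [s, t] ?_ (by simp)
    · simp [cup, cupOne, dl_cons, dl_nil] at this
      linear_combination this
    · intro a ha b hb
      simp at ha hb
      have hη' : 0 < η := hη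
      rcases ha with rfl | rfl <;> rcases hb with rfl | rfl
      · rwa [dist_self]
      · exact hst
      · rwa [dist_comm]
      · rwa [dist_self]
  have hclopen : IsClopen {t | ind F g t - c [t] = ind F g x - c [x]} := by
    constructor
    · rw [← isOpen_compl_iff, Metric.isOpen_iff]
      intro s hs
      refine ⟨η, hη, fun t ht ht' => hs ?_⟩
      rw [Metric.mem_ball] at ht
      have := hstep t s ht
      exact this.trans ht'
    · rw [Metric.isOpen_iff]
      intro s hs
      refine ⟨η, hη, fun t ht => ?_⟩
      rw [Metric.mem_ball] at ht
      have := hstep s t (by rwa [dist_comm])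
      exact this.trans hs
  have := hclopen.connectedComponent_subset (x := x) rfl hyx
  have e : ind F g y - c [y] = ind F g x - c [x] := this
  rw [hc0 y (by simp only [farSet]; show 1/2 ≤ |g y|; rw [hgy]; norm_num [abs_of_pos]),
    hc0 x (by simp only [farSet]; show 1/2 ≤ |g x|; rw [hgx]; norm_num [abs_of_neg])] at e
  have i1 : ind F g y = 0 := by simp only [ind]; rw [if_neg]; rw [hgy]; norm_num
  have i2 : ind F g x = 1 := by simp only [ind]; rw [if_pos]; rw [hgx]; norm_num
  rw [i1, i2] at e
  simp at e

/-- extend a finite word to a bi-infinite one -/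
noncomputable def wordExt {K : Type*} [Nonempty K] (N : ℕ) (u : Fin N → K) : ℤ → K := fun j =>
  if h : 0 ≤ j ∧ j < N then u ⟨j.toNat, by omega⟩ else Classical.arbitrary K

theorem wordExt_cont {K : Type*} [Nonempty K] [TopologicalSpace K] (N : ℕ) :
    Continuous (wordExt (K := K) N) := by
  refine continuous_pi fun j => ?_
  unfold wordExt
  by_cases h : 0 ≤ j ∧ j < N
  · simp only [dif_pos h]; fun_prop
  · simp only [h, dif_neg, not_false_eq_true]; fun_prop

theorem wordExt_apply {K : Type*} [Nonempty K] (N : ℕ) (u : Fin N → K) (i : Fin N) :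
    wordExt N u (i : ℕ) = u i := by
  simp [wordExt]

theorem shift_iter {K : Type*} (i : ℕ) (x : ℤ → K) (j : ℤ) : (shift K)^[i] x j = x (j + i) := by
  induction i generalizing x with
  | zero => simp
  | succ i ih =>
    rw [Function.iterate_succ_apply, ih]
    simp only [shift]; congr 1; push_cast; ring

theorem mdim_shift {K F : Type*} [Field F] [MetricSpace K] [CompactSpace K] [Nonempty K] (k : ℕ)
    (hk : topDim K ≤ k) (gs : List (K → ℝ)) (hlen : gs.length = k) (hne : gs ≠ [])
    (hc : ∀ g ∈ gs, Continuous g) (h : Ess F gs)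
    (d : (ℤ → K) → (ℤ → K) → ℝ) (hd : IsCompatMetric d) : mdim (shift K) d = k := by
  apply le_antisymm
  · exact mdim_upper d hd (shift K) k hk (fun j x => x j) (fun j => continuous_apply j)
      (fun x y h => funext h) (fun j x => rfl)
  · rw [← hlen]
    refine mdim_lower d hd (shift K) (fun x => x 0) (continuous_apply 0) (fun N => wordExt N)
      wordExt_cont (fun N u i => ?_) gs hne hc h
    rw [shift_iter, zero_add, wordExt_apply]

theorem final {P Q : Type*}
    [MetricSpace P] [CompactSpace P] [MetricSpace Q] [CompactSpace Q]
    (hP : topDim P = 2) (hQ : topDim Q = 2) (hPQ : topDim (P × Q) = 3)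
    (hEP : ∃ (F : Type) (_ : Field F) (gs : List (P → ℝ)), gs.length = 2 ∧
      (∀ g ∈ gs, Continuous g) ∧ Ess F gs)
    (hEQ : ∃ (F : Type) (_ : Field F) (gs : List (Q → ℝ)), gs.length = 2 ∧
      (∀ g ∈ gs, Continuous g) ∧ Ess F gs)
    (d₁ : (ℤ → P) → (ℤ → P) → ℝ) (hd₁ : IsCompatMetric d₁)
    (d₂ : (ℤ → Q) → (ℤ → Q) → ℝ) (hd₂ : IsCompatMetric d₂)
    (d₃ : ((ℤ → P) × (ℤ → Q)) → ((ℤ → P) × (ℤ → Q)) → ℝ) (hd₃ : IsCompatMetric d₃) :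
    mdim (shift P) d₁ = 2 ∧ mdim (shift Q) d₂ = 2 ∧
      mdim (Prod.map (shift P) (shift Q)) d₃ = 3 ∧
      mdim (Prod.map (shift P) (shift Q)) d₃ <
        mdim (shift P) d₁ + mdim (shift Q) d₂ := by
  have hneP : Nonempty P := by
    by_contra hcon
    rw [not_nonempty_iff] at hcon
    have : topDim P ≤ 0 := topDim_zero
    rw [hP] at this; simp at this
  have hneQ : Nonempty Q := by
    by_contra hcon
    rw [not_nonempty_iff] at hcon
    have : topDim Q ≤ 0 := topDim_zero
    rw [hQ] at this; simp at this
  have m1 : mdim (shift P) d₁ = 2 := by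
    obtain ⟨F, _, gs, hl, hc, h⟩ := hEP
    exact_mod_cast mdim_shift 2 (by rw [hP]; rfl) gs hl (by rintro rfl; simp at hl) hc h d₁ hd₁
  have m2 : mdim (shift Q) d₂ = 2 := by
    obtain ⟨F, _, gs, hl, hc, h⟩ := hEQ
    exact_mod_cast mdim_shift 2 (by rw [hQ]; rfl) gs hl (by rintro rfl; simp at hl) hc h d₂ hd₂
  have m3 : mdim (Prod.map (shift P) (shift Q)) d₃ = 3 := by
    apply le_antisymm
    · have := mdim_upper (K := P × Q) d₃ hd₃ (Prod.map (shift P) (shift Q)) 3 (by rw [hPQ]; rfl)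
        (fun j x => (x.1 j, x.2 j)) (fun j => by fun_prop)
        (fun x y h => by
          have h1 := fun j => (Prod.ext_iff.1 (h j)).1
          have h2 := fun j => (Prod.ext_iff.1 (h j)).2
          exact Prod.ext (funext h1) (funext h2)) (fun j x => rfl)
      exact_mod_cast this
    · obtain ⟨F, _, gs, hl, hc, h⟩ := hEP
      obtain ⟨g, hgc, hg⟩ := ess_one (Q := Q) (F := F) (by rw [hQ]; simp)
      have hE := ess_prod (X := P × Q) Prod.mk Prod.fst Prod.snd (fun _ _ => rfl) (fun _ _ => rfl)
        (fun η hη => ⟨η, hη, fun y y' z z' h1 h2 => by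
          rw [Prod.dist_eq]; exact max_lt h1 h2⟩) gs [g] (by rintro rfl; simp at hl) h hg
      have := mdim_lower d₃ hd₃ (Prod.map (shift P) (shift Q)) (fun x => (x.1 0, x.2 0))
        (by fun_prop) (fun N u => (wordExt N (fun i => (u i).1), wordExt N (fun i => (u i).2)))
        (fun N => by
          refine Continuous.prodMk ((wordExt_cont N).comp (by fun_prop))
            ((wordExt_cont N).comp (by fun_prop))) (fun N u i => by
          rw [Prod.map_iterate]
          simp only [Prod.map]
          rw [shift_iter, zero_add, wordExt_apply, shift_iter, zero_add, wordExt_apply]) _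
        (by simp) (by
          intro G hG
          rcases List.mem_append.1 hG with hG | hG
          · obtain ⟨g, hg, rfl⟩ := List.mem_map.1 hG
            exact (hc g hg).comp continuous_fst
          · simp at hG; subst hG
            exact hgc.comp continuous_snd) hE
      simp [hl] at this
      exact this
  refine ⟨m1, m2, m3, ?_⟩
  rw [m1, m2, m3]
  norm_num

end MeanDimPaper

namespace MeanDimPaper

/-- A non-vanishing extension exists for the pair `(f, f')`. -/
def Ext {P P' : Type*} [TopologicalSpace P] [TopologicalSpace P'] (f : P → ℂ) (f' : P' → ℂ) : Prop :=
  ∃ Φ : P × P' → ℂ × ℂ, Continuous Φ ∧ (∀ p, Φ p ≠ 0) ∧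
    ∀ p, 1 ≤ ‖f p.1‖ ∨ 1 ≤ ‖f' p.2‖ → Φ p = (f p.1, f' p.2)

def ell (q : Fin 3) (w : ℂ) : ℝ := ![w.re, w.im, - w.re - w.im] q

theorem ell_cont (q : Fin 3) : Continuous (ell q) := by
  have h1 := Complex.continuous_re
  have h2 := Complex.continuous_im
  fin_cases q
  · exact h1
  · exact h2
  · exact h1.neg.sub h2

theorem ell_sum (w : ℂ) : ∑ q, ell q w = 0 := by
  simp [Fin.sum_univ_three, ell]

noncomputable def bigM (w : ℂ × ℂ) : ℝ :=
  Finset.univ.sup' Finset.univ_nonempty (fun q : Fin 3 => max (- ell q w.1) (- ell q w.2))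

theorem bigM_cont : Continuous bigM := by
  unfold bigM
  refine Continuous.finset_sup'_apply _ (fun q _ => ?_)
  exact (((ell_cont q).comp continuous_fst).neg).max (((ell_cont q).comp continuous_snd).neg)

theorem le_bigM1 (w : ℂ × ℂ) (q : Fin 3) : - ell q w.1 ≤ bigM w :=
  (le_max_left _ _).trans (Finset.le_sup' (fun q : Fin 3 => max (- ell q w.1) (- ell q w.2))
    (Finset.mem_univ q))

theorem le_bigM2 (w : ℂ × ℂ) (q : Fin 3) : - ell q w.2 ≤ bigM w :=
  (le_max_right _ _).trans (Finset.le_sup' (fun q : Fin 3 => max (- ell q w.1) (- ell q w.2))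
    (Finset.mem_univ q))

theorem bigM_attain (w : ℂ × ℂ) : (∃ q, - ell q w.1 = bigM w) ∨ ∃ q, - ell q w.2 = bigM w := by
  obtain ⟨q, _, hq⟩ := Finset.exists_mem_eq_sup' Finset.univ_nonempty
    (fun q : Fin 3 => max (- ell q w.1) (- ell q w.2))
  have hq' : bigM w = max (- ell q w.1) (- ell q w.2) := hq
  rcases max_choice (- ell q w.1) (- ell q w.2) with h | h
  · left; exact ⟨q, by rw [hq', h]⟩
  · right; exact ⟨q, by rw [hq', h]⟩

theorem eq_zero_of_ell (w : ℂ) (h : ∀ q, 0 ≤ ell q w) : w = 0 := by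
  have h0 := h 0
  have h1 := h 1
  have h2 := h 2
  simp [ell] at h0 h1 h2
  apply Complex.ext <;> simp <;> linarith

theorem bigM_pos (w : ℂ × ℂ) (hw : w ≠ 0) : 0 < bigM w := by
  by_contra hcon
  push Not at hcon
  apply hw
  apply Prod.ext
  · exact eq_zero_of_ell _ (fun q => by have := le_bigM1 w q; linarith)
  · exact eq_zero_of_ell _ (fun q => by have := le_bigM2 w q; linarith)

theorem norm_of_ell (w : ℂ) (q : Fin 3) (h : ell q w = -2) : 1 ≤ ‖w‖ := by
  have h1 := Complex.abs_re_le_norm w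
  have h2 := Complex.abs_im_le_norm w
  have a1 := neg_abs_le w.re
  have a2 := neg_abs_le w.im
  have b1 := le_abs_self w.re
  have b2 := le_abs_self w.im
  fin_cases q <;> simp [ell] at h <;> linarith

section D
variable {P : Type*} [MetricSpace P] [CompactSpace P]

/-- Local model data: the coordinate function attached to an injective triple. -/
noncomputable def triF (ρ : ℕ → P → ℝ) (e : Fin 3 → ℕ) (x : P) : ℂ :=
  ⟨6 * (ρ (e 0) x - 1/3), 6 * (ρ (e 1) x - 1/3)⟩

theorem triF_cont {n : ℕ} {ρ : ℕ → P → ℝ} (h : PU n ρ) (e : Fin 3 → ℕ) : Continuous (triF ρ e) := by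
  have h0 := h.cont (e 0)
  have h1 := h.cont (e 1)
  have : triF ρ e = fun x => ((6 * (ρ (e 0) x - 1/3) : ℝ) : ℂ) + ((6 * (ρ (e 1) x - 1/3) : ℝ) : ℂ) * Complex.I := by
    funext x
    apply Complex.ext <;> simp [triF]
  rw [this]
  fun_prop

theorem ell_triF {n : ℕ} {ρ : ℕ → P → ℝ} (h : PU n ρ) (e : Fin 3 → ℕ) (he : Function.Injective e)
    (x : P) (hx : ∀ j, j ∉ range e → ρ j x = 0) (hen : ∀ q, e q < n) (q : Fin 3) :
    ell q (triF ρ e x) = 6 * (ρ (e q) x - 1/3) := by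
  have hs : ρ (e 0) x + ρ (e 1) x + ρ (e 2) x = 1 := by
    rw [← h.sum x, ← Fin.sum_univ_three (fun q => ρ (e q) x)]
    rw [← Finset.sum_image (s := Finset.univ) (g := e) (f := fun j => ρ j x) (fun a _ b _ hab => he hab)]
    apply Finset.sum_subset
    · intro j hj
      obtain ⟨q, _, rfl⟩ := Finset.mem_image.1 hj
      exact Finset.mem_range.2 (hen q)
    · intro j _ hj
      apply hx
      rintro ⟨q, rfl⟩
      exact hj (Finset.mem_image.2 ⟨q, Finset.mem_univ _, rfl⟩)
  fin_cases q
  · simp [ell, triF]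
  · simp [ell, triF]
  · simp [ell, triF]; linarith

noncomputable def newR (e : Fin 3 → ℕ) (i : ℕ) (w : ℂ) (M : ℝ) : ℝ :=
  ∑ q, if e q = i then 1/3 + ell q w / (3 * M) else 0

theorem newR_at (e : Fin 3 → ℕ) (he : Function.Injective e) (q : Fin 3) (w : ℂ) (M : ℝ) :
    newR e (e q) w M = 1/3 + ell q w / (3 * M) := by
  unfold newR
  rw [Finset.sum_eq_single q]
  · simp
  · intro b _ hb
    rw [if_neg (fun h => hb (he h))]
  · simp

theorem newR_off (e : Fin 3 → ℕ) (i : ℕ) (hi : i ∉ range e) (w : ℂ) (M : ℝ) : newR e i w M = 0 := by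
  unfold newR
  apply Finset.sum_eq_zero
  intro q _
  rw [if_neg]
  rintro rfl; exact hi ⟨q, rfl⟩

theorem newR_sum (N : ℕ) (e : Fin 3 → ℕ) (he : ∀ q, e q < N) (w : ℂ) (M : ℝ) :
    ∑ i ∈ Finset.range N, newR e i w M = 1 := by
  unfold newR
  rw [Finset.sum_comm]
  have : ∀ q, (∑ i ∈ Finset.range N, if e q = i then 1/3 + ell q w / (3 * M) else 0)
      = 1/3 + ell q w / (3 * M) := by
    intro q
    rw [Finset.sum_ite_eq]
    simp [he q]
  simp only [this]
  have h2 : ∑ q, ell q w / (3 * M) = 0 := by rw [← Finset.sum_div, ell_sum, zero_div]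
  rw [Finset.sum_add_distrib, h2]
  simp

theorem newR_nonneg (e : Fin 3 → ℕ) (i : ℕ) (w : ℂ) (M : ℝ) (hM : 0 < M) (h : ∀ q, - ell q w ≤ M) :
    0 ≤ newR e i w M := by
  unfold newR
  apply Finset.sum_nonneg
  intro q _
  split_ifs
  · have : -(1/3) ≤ ell q w / (3 * M) := by
      rw [le_div_iff₀ (by positivity)]
      have := h q
      linarith
    linarith
  · exact le_rfl

theorem newR_cont {Y : Type*} [TopologicalSpace Y] (e : Fin 3 → ℕ) (i : ℕ) (w : Y → ℂ) (M : Y → ℝ)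
    (hw : Continuous w) (hM : Continuous M) (h0 : ∀ y, M y ≠ 0) :
    Continuous (fun y => newR e i (w y) (M y)) := by
  unfold newR
  refine continuous_finsetSum _ (fun q _ => ?_)
  split_ifs
  · refine continuous_const.add (((ell_cont q).comp hw).div (continuous_const.mul hM) (fun y => ?_))
    have := h0 y
    positivity
  · exact continuous_const

theorem topDim_sq_le (hP : topDim P ≤ 2)
    (hE : ∀ f f' : P → ℂ, Continuous f → Continuous f' → Ext f f') : topDim (P × P) ≤ 3 := by
  classical
  refine topDim_le _ (fun α hα => ?_)
  rcases α.eq_empty_or_nonempty with rfl | ⟨U₀, hU₀⟩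
  · refine (covD_le ∅ ∅ hα (fun V hV => hV.elim)).trans ?_
    apply ord_le_of _ 3
    intro n f _ hf
    exact (hf 0).elim
  obtain ⟨δ, hδ, hL⟩ := lebesgue_number_lemma_of_metric_sUnion (isCompact_univ (X := P × P)) hα.1
    (by rw [hα.2])
  obtain ⟨n, ρ, hρ₀, hact, hsub⟩ := exists_PU 2 hP (range fun x : P => Metric.ball x (δ / 2)) (by
    constructor
    · rintro _ ⟨x, rfl⟩; exact Metric.isOpen_ball
    · rw [eq_univ_iff_forall]
      intro x
      exact ⟨_, ⟨x, rfl⟩, Metric.mem_ball_self (by positivity)⟩)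
  set N := n + 3 with hN
  have hρ : PU N ρ := by
    refine ⟨hρ₀.cont, hρ₀.nonneg, fun j x hj => hρ₀.zero j x (by omega), fun x => ?_⟩
    rw [← hρ₀.sum x]
    symm
    apply Finset.sum_subset
    · intro j hj; simp at hj ⊢; omega
    · intro j _ hj
      apply hρ₀.zero
      simpa using hj
  let I := {s : Finset ℕ // s ∈ Finset.powersetCard 3 (Finset.range N)}
  have hIc : ∀ s : I, s.1.card = 3 := fun s => (Finset.mem_powersetCard.1 s.2).2
  have hIs : ∀ s : I, s.1 ⊆ Finset.range N := fun s => (Finset.mem_powersetCard.1 s.2).1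
  let e : I → Fin 3 → ℕ := fun s => s.1.orderEmbOfFin (hIc s)
  have hei : ∀ s, Function.Injective (e s) := fun s => (s.1.orderEmbOfFin (hIc s)).injective
  have her : ∀ s, range (e s) = (s.1 : Set ℕ) := fun s => Finset.range_orderEmbOfFin _ _
  have hen : ∀ s q, e s q < N := fun s q => Finset.mem_range.1 (hIs s (Finset.orderEmbOfFin_mem _ _ _))
  let S : I → Set P := fun s => {x | ∀ j, j ∉ range (e s) → ρ j x = 0}
  have hScl : ∀ s, IsClosed (S s) := by
    intro s
    have : S s = ⋂ j, ⋂ (_ : j ∉ range (e s)), {x | ρ j x = 0} := by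
      ext x; simp [S]
    rw [this]
    exact isClosed_iInter fun j => isClosed_iInter fun _ =>
      isClosed_eq (hρ.cont j) continuous_const
  have hScov : ∀ x, ∃ s, x ∈ S s := by
    intro x
    have h1 : act n ρ x ⊆ Finset.range N := by
      intro j hj
      unfold act at hj
      have := Finset.mem_range.1 (Finset.mem_filter.1 hj).1
      exact Finset.mem_range.2 (by omega)
    obtain ⟨s, hs1, hs2, hs3⟩ := Finset.exists_subsuperset_card_eq h1 (hact x)
      (by simp [hN])
    refine ⟨⟨s, Finset.mem_powersetCard.2 ⟨hs2, hs3⟩⟩, ?_⟩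
    intro j hj
    rw [her] at hj
    by_contra hne
    apply hj
    apply hs1
    rw [mem_act hρ₀]
    exact lt_of_le_of_ne (hρ₀.nonneg _ _) (Ne.symm hne)
  choose Φ hΦc hΦ0 hΦ using fun s t : I => hE (triF ρ (e s)) (triF ρ (e t))
    (triF_cont hρ _) (triF_cont hρ _)
  let R1 : I → I → ℕ → P × P → ℝ := fun s t i p => newR (e s) i (Φ s t p).1 (bigM (Φ s t p))
  let R2 : I → I → ℕ → P × P → ℝ := fun s t i p => newR (e t) i (Φ s t p).2 (bigM (Φ s t p))
  have hM0 : ∀ s t p, 0 < bigM (Φ s t p) := fun s t p => bigM_pos _ (hΦ0 s t p)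
  have bdry : ∀ s t x y, x ∈ S s → y ∈ S t → ((∃ q, ρ (e s q) x = 0) ∨ ∃ q, ρ (e t q) y = 0) →
      ∀ i, R1 s t i (x, y) = ρ i x ∧ R2 s t i (x, y) = ρ i y := by
    intro s t x y hx hy hb i
    have e1 := ell_triF hρ (e s) (hei s) x hx (hen s)
    have e2 := ell_triF hρ (e t) (hei t) y hy (hen t)
    have hval : Φ s t (x, y) = (triF ρ (e s) x, triF ρ (e t) y) := by
      apply hΦ
      rcases hb with ⟨q, hq⟩ | ⟨q, hq⟩
      · left; apply norm_of_ell _ q; rw [e1, hq]; norm_num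
      · right; apply norm_of_ell _ q; rw [e2, hq]; norm_num
    have hM : bigM (Φ s t (x, y)) = 2 := by
      apply le_antisymm
      · rcases bigM_attain (Φ s t (x, y)) with ⟨q, hq⟩ | ⟨q, hq⟩
        · rw [← hq, hval, e1]
          have := hρ.nonneg (e s q) x
          linarith
        · rw [← hq, hval, e2]
          have := hρ.nonneg (e t q) y
          linarith
      · rcases hb with ⟨q, hq⟩ | ⟨q, hq⟩
        · have := le_bigM1 (Φ s t (x, y)) q
          rw [hval] at this ⊢
          rw [e1, hq] at this
          linarith
        · have := le_bigM2 (Φ s t (x, y)) q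
          rw [hval] at this ⊢
          rw [e2, hq] at this
          linarith
    constructor
    · simp only [R1]
      rw [hM, hval]
      by_cases hi : i ∈ range (e s)
      · obtain ⟨q, rfl⟩ := hi
        rw [newR_at _ (hei s), e1]; ring
      · rw [newR_off _ _ hi, hx i hi]
    · simp only [R2]
      rw [hM, hval]
      by_cases hi : i ∈ range (e t)
      · obtain ⟨q, rfl⟩ := hi
        rw [newR_at _ (hei t), e2]; ring
      · rw [newR_off _ _ hi, hy i hi]
  have hdiff : ∀ s s' : I, s ≠ s' → ∀ x, x ∈ S s → x ∈ S s' → ∃ q, ρ (e s q) x = 0 := by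
    intro s s' hne x hx hx'
    have : ¬ s.1 ⊆ s'.1 := by
      intro hsub'
      apply hne
      exact Subtype.ext (Finset.eq_of_subset_of_card_le hsub' (by rw [hIc, hIc]))
    obtain ⟨j, hj, hj'⟩ := Finset.not_subset.1 this
    have : j ∈ range (e s) := by rw [her]; exact hj
    obtain ⟨q, rfl⟩ := this
    refine ⟨q, hx' _ ?_⟩
    rw [her]; exact hj'
  have agree : ∀ s t s' t' x y, x ∈ S s → y ∈ S t → x ∈ S s' → y ∈ S t' → ∀ i,
      R1 s t i (x, y) = R1 s' t' i (x, y) ∧ R2 s t i (x, y) = R2 s' t' i (x, y) := by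
    intro s t s' t' x y hx hy hx' hy' i
    by_cases hs : s = s'
    · by_cases ht : t = t'
      · subst hs; subst ht; exact ⟨rfl, rfl⟩
      · have b1 := bdry s t x y hx hy (Or.inr (hdiff t t' ht y hy hy')) i
        have b2 := bdry s' t' x y hx' hy' (Or.inr (hdiff t' t (Ne.symm ht) y hy' hy)) i
        exact ⟨b1.1.trans b2.1.symm, b1.2.trans b2.2.symm⟩
    · have b1 := bdry s t x y hx hy (Or.inl (hdiff s s' hs x hx hx')) i
      have b2 := bdry s' t' x y hx' hy' (Or.inl (hdiff s' s (Ne.symm hs) x hx' hx)) i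
      exact ⟨b1.1.trans b2.1.symm, b1.2.trans b2.2.symm⟩
  choose c hc using hScov
  let T1 : ℕ → P × P → ℝ := fun i p => R1 (c p.1) (c p.2) i p
  let T2 : ℕ → P × P → ℝ := fun i p => R2 (c p.1) (c p.2) i p
  have hcover : (⋃ st : I × I, S st.1 ×ˢ S st.2) = univ := by
    rw [eq_univ_iff_forall]
    rintro ⟨x, y⟩
    exact mem_iUnion.2 ⟨(c x, c y), hc x, hc y⟩
  have hR1c : ∀ s t i, Continuous (R1 s t i) := fun s t i =>
    newR_cont _ _ _ _ (continuous_fst.comp (hΦc s t)) (bigM_cont.comp (hΦc s t))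
      (fun p => (hM0 s t p).ne')
  have hR2c : ∀ s t i, Continuous (R2 s t i) := fun s t i =>
    newR_cont _ _ _ _ (continuous_snd.comp (hΦc s t)) (bigM_cont.comp (hΦc s t))
      (fun p => (hM0 s t p).ne')
  have hT1 : PU N T1 := by
    refine ⟨fun i => ?_, fun i p => ?_, fun i p hi => ?_, fun p => ?_⟩
    · refine (locallyFinite_of_finite (fun st : I × I => S st.1 ×ˢ S st.2)).continuous hcover
        (fun st => (hScl _).prod (hScl _)) (fun st => ?_)
      refine (hR1c st.1 st.2 i).continuousOn.congr ?_
      rintro ⟨x, y⟩ ⟨hx, hy⟩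
      exact (agree _ _ _ _ x y (hc x) (hc y) hx hy i).1
    · exact newR_nonneg _ _ _ _ (hM0 _ _ _) (fun q => le_bigM1 _ q)
    · apply newR_off
      rintro ⟨q, rfl⟩
      have := hen (c p.1) q
      omega
    · exact newR_sum N _ (hen _) _ _
  have hT2 : PU N T2 := by
    refine ⟨fun i => ?_, fun i p => ?_, fun i p hi => ?_, fun p => ?_⟩
    · refine (locallyFinite_of_finite (fun st : I × I => S st.1 ×ˢ S st.2)).continuous hcover
        (fun st => (hScl _).prod (hScl _)) (fun st => ?_)
      refine (hR2c st.1 st.2 i).continuousOn.congr ?_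
      rintro ⟨x, y⟩ ⟨hx, hy⟩
      exact (agree _ _ _ _ x y (hc x) (hc y) hx hy i).2
    · exact newR_nonneg _ _ _ _ (hM0 _ _ _) (fun q => le_bigM2 _ q)
    · apply newR_off
      rintro ⟨q, rfl⟩
      have := hen (c p.2) q
      omega
    · exact newR_sum N _ (hen _) _ _
  have supp1 : ∀ i p, 0 < T1 i p → 0 < ρ i p.1 := by
    rintro i ⟨x, y⟩ h
    by_contra hcon
    have h0 : ρ i x = 0 := le_antisymm (not_lt.1 hcon) (hρ.nonneg _ _)
    by_cases hi : i ∈ range (e (c x))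
    · obtain ⟨q, rfl⟩ := hi
      have := (bdry (c x) (c y) x y (hc x) (hc y) (Or.inl ⟨q, h0⟩) (e (c x) q)).1
      have h' : 0 < R1 (c x) (c y) (e (c x) q) (x, y) := h
      rw [this] at h'
      linarith
    · have : T1 i (x, y) = 0 := newR_off _ _ hi _ _
      linarith
  have supp2 : ∀ i p, 0 < T2 i p → 0 < ρ i p.2 := by
    rintro i ⟨x, y⟩ h
    by_contra hcon
    have h0 : ρ i y = 0 := le_antisymm (not_lt.1 hcon) (hρ.nonneg _ _)
    by_cases hi : i ∈ range (e (c y))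
    · obtain ⟨q, rfl⟩ := hi
      have := (bdry (c x) (c y) x y (hc x) (hc y) (Or.inr ⟨q, h0⟩) (e (c y) q)).2
      have h' : 0 < R2 (c x) (c y) (e (c y) q) (x, y) := h
      rw [this] at h'
      linarith
    · have : T2 i (x, y) = 0 := newR_off _ _ hi _ _
      linarith
  have a1 : ∀ p, act N T1 p ⊆ (c p.1).1 := by
    intro p j hj
    rw [mem_act hT1] at hj
    by_contra hcon
    have : T1 j p = 0 := newR_off _ _ (by rw [her]; exact hcon) _ _
    linarith
  have a2 : ∀ p, act N T2 p ⊆ (c p.2).1 := by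
    intro p j hj
    rw [mem_act hT2] at hj
    by_contra hcon
    have : T2 j p = 0 := newR_off _ _ (by rw [her]; exact hcon) _ _
    linarith
  have hcard : ∀ p, (act N T1 p).card + (act N T2 p).card ≤ 5 := by
    intro p
    have c1 := Finset.card_le_card (a1 p)
    have c2 := Finset.card_le_card (a2 p)
    rw [hIc] at c1 c2
    have hMp := hM0 (c p.1) (c p.2) p
    rcases bigM_attain (Φ (c p.1) (c p.2) p) with ⟨q, hq⟩ | ⟨q, hq⟩
    · have hz : T1 (e (c p.1) q) p = 0 := by
        simp only [T1, R1]
        rw [newR_at _ (hei _), show ell q (Φ (c p.1) (c p.2) p).1 = - bigM (Φ (c p.1) (c p.2) p) by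
          linarith]
        field_simp; ring
      have hss : act N T1 p ⊂ (c p.1).1 := by
        refine Finset.ssubset_iff_of_subset (a1 p) |>.2 ⟨e (c p.1) q, ?_, ?_⟩
        · exact Finset.orderEmbOfFin_mem _ _ _
        · rw [mem_act hT1, hz]; exact lt_irrefl _
      have := Finset.card_lt_card hss
      rw [hIc] at this
      omega
    · have hz : T2 (e (c p.2) q) p = 0 := by
        simp only [T2, R2]
        rw [newR_at _ (hei _), show ell q (Φ (c p.1) (c p.2) p).2 = - bigM (Φ (c p.1) (c p.2) p) by
          linarith]
        field_simp; ring
      have hss : act N T2 p ⊂ (c p.2).1 := by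
        refine Finset.ssubset_iff_of_subset (a2 p) |>.2 ⟨e (c p.2) q, ?_, ?_⟩
        · exact Finset.orderEmbOfFin_mem _ _ _
        · rw [mem_act hT2, hz]; exact lt_irrefl _
      have := Finset.card_lt_card hss
      rw [hIc] at this
      omega
  obtain ⟨β, hβ, hord, hW⟩ := staircase (X := P × P) (A := Bool) (fun _ => N)
    (fun b => if b then T1 else T2) (fun b => by cases b <;> simp [hT1, hT2]) 3 (fun p => by
      have k1 := hcard p
      have k2 := Finset.card_pos.2 (act_nonempty hT1 p)
      have k3 := Finset.card_pos.2 (act_nonempty hT2 p)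
      simp
      omega)
  refine (covD_le α β hβ (fun W hWβ => ?_)).trans hord
  rcases W.eq_empty_or_nonempty with rfl | ⟨p, hp⟩
  · exact ⟨U₀, hU₀, empty_subset _⟩
  obtain ⟨i, hi⟩ := hW W hWβ
  obtain ⟨U, hU, hball⟩ := hL p (mem_univ _)
  refine ⟨U, hU, fun p' hp' => hball ?_⟩
  have key : ∀ (j : ℕ) (x y : P), 0 < ρ j x → 0 < ρ j y → dist x y < δ := by
    intro j x y hx hy
    have hj : j < n := by
      by_contra hh
      have := hρ₀.zero j x (by omega)
      linarith
    obtain ⟨V, ⟨z, rfl⟩, hV⟩ := hsub j hj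
    have q1 := hV x hx
    have q2 := hV y hy
    rw [Metric.mem_ball] at q1 q2
    have := dist_triangle_right x y z
    linarith
  rw [Metric.mem_ball, Prod.dist_eq]
  have t1 := hi true p hp
  have t1' := hi true p' hp'
  have t2 := hi false p hp
  have t2' := hi false p' hp'
  simp only [if_true] at t1 t1'
  simp only [Bool.false_eq_true, if_false] at t2 t2'
  exact max_lt (key _ _ _ (supp1 _ _ t1') (supp1 _ _ t1)) (key _ _ _ (supp2 _ _ t2') (supp2 _ _ t2))

end D
end MeanDimPaper

namespace MeanDimPaper

section Homotopy
variable {Y : Type*} [MetricSpace Y] [CompactSpace Y]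

/-- Homotopy extension for non-vanishing maps. -/
theorem hom_ext (B : Set Y) (hB : IsClosed B) (H : Y → ℝ → ℂ × ℂ)
    (hH : Continuous (fun q : Y × ℝ => H q.1 q.2))
    (hH0 : ∀ x ∈ B, ∀ t ∈ Icc (0:ℝ) 1, H x t ≠ 0)
    (Φ : Y → ℂ × ℂ) (hΦ : Continuous Φ) (hΦ0 : ∀ x, Φ x ≠ 0) (hΦB : ∀ x ∈ B, Φ x = H x 0) :
    ∃ Ψ : Y → ℂ × ℂ, Continuous Ψ ∧ (∀ x, Ψ x ≠ 0) ∧ ∀ x ∈ B, Ψ x = H x 1 := by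
  have hHt : ∀ u : Y → ℝ, Continuous u → Continuous (fun x => H x (u x)) := fun u hu =>
    hH.comp (continuous_id.prodMk hu)
  set K : Y → ℝ → ℂ × ℂ := fun x t => H x t + (Φ x - H x 0) with hK
  have hKc : Continuous (fun q : Y × ℝ => K q.1 q.2) := by
    refine hH.add ((hΦ.comp continuous_fst).sub ((hHt (fun _ => 0) continuous_const).comp continuous_fst))
  set V : Set Y := Prod.fst '' ({q : Y × ℝ | K q.1 q.2 = 0} ∩ (univ ×ˢ Icc (0:ℝ) 1)) with hV
  have hVc : IsClosed V := by
    apply IsCompact.isClosed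
    refine IsCompact.image ?_ continuous_fst
    exact (isCompact_univ.prod isCompact_Icc).inter_left (isClosed_eq hKc continuous_const)
  have hd : Disjoint V B := by
    rw [Set.disjoint_left]
    rintro x ⟨⟨x', t⟩, ⟨h1, h2⟩, rfl⟩ hx
    simp only [mem_ofPred_eq, hK] at h1
    simp only [mem_prod, mem_univ, true_and] at h2
    rw [hΦB _ hx, sub_self, add_zero] at h1
    exact hH0 _ hx t h2 h1
  obtain ⟨u, hu0, hu1, huI⟩ := exists_continuous_zero_one_of_isClosed hVc hB hd
  refine ⟨fun x => K x (u x), hKc.comp (continuous_id.prodMk u.continuous), ?_, ?_⟩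
  · intro x hx
    have hxV : x ∈ V := ⟨(x, u x), ⟨hx, ⟨mem_univ _, huI x⟩⟩, rfl⟩
    have h0 : u x = 0 := hu0 hxV
    simp only [hK, h0] at hx
    apply hΦ0 x
    rw [← hx]; abel
  · intro x hx
    have h1 : u x = 1 := hu1 hx
    simp only [h1, hK, hΦB x hx, sub_self, add_zero]

theorem seg_ne (u v : ℂ) (h : 0 < (u * (starRingEnd ℂ) v).re) (t : ℝ) (ht : t ∈ Icc (0:ℝ) 1) :
    (1 - (t:ℂ)) * u + t * v ≠ 0 := by
  intro hz
  have h1 : (((1 - (t:ℂ)) * u + t * v) * (starRingEnd ℂ) v).re = 0 := by rw [hz]; simp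
  simp only [Complex.mul_re, Complex.add_re, Complex.add_im, Complex.mul_im, Complex.sub_re,
    Complex.sub_im, Complex.one_re, Complex.one_im, Complex.ofReal_re, Complex.ofReal_im,
    Complex.conj_re, Complex.conj_im] at h h1
  obtain ⟨ht0, ht1⟩ := ht
  have h2 : (1 - t) * (u.re * v.re + u.im * v.im) + t * (v.re ^ 2 + v.im ^ 2) = 0 := by linarith
  have h3 : 0 < v.re ^ 2 + v.im ^ 2 := by
    by_contra hc
    have : v.re = 0 := by nlinarith [sq_nonneg v.re, sq_nonneg v.im]
    have : v.im = 0 := by nlinarith [sq_nonneg v.re, sq_nonneg v.im]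
    simp [*] at h
  rcases ht0.eq_or_lt with rfl | h0
  · simp at h2; linarith
  · nlinarith [mul_pos h0 h3, mul_nonneg (sub_nonneg.2 ht1) (by linarith : 0 ≤ u.re * v.re + u.im * v.im)]

/-- path of invertible maps from the swap to the identity -/
noncomputable def rotA (ω : ℂ) (z : ℂ × ℂ) : ℂ × ℂ :=
  ((z.1 + z.2) / 2 + ω * ((z.1 - z.2) / 2), (z.1 + z.2) / 2 - ω * ((z.1 - z.2) / 2))

theorem rotA_ne (ω : ℂ) (hω : ω ≠ 0) (z : ℂ × ℂ) (hz : z ≠ 0) : rotA ω z ≠ 0 := by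
  intro h
  apply hz
  have h1 : (z.1 + z.2) / 2 + ω * ((z.1 - z.2) / 2) = 0 := congrArg Prod.fst h
  have h2 : (z.1 + z.2) / 2 - ω * ((z.1 - z.2) / 2) = 0 := congrArg Prod.snd h
  have h3 : z.1 + z.2 = 0 := by linear_combination h1 + h2
  have h4 : ω * (z.1 - z.2) = 0 := by linear_combination h1 - h2
  have h5 := (mul_eq_zero.1 h4).resolve_left hω
  ext
  · simp only [Prod.fst_zero]; linear_combination (h3 + h5) / 2
  · simp only [Prod.snd_zero]; linear_combination (h3 - h5) / 2

noncomputable def powM (p : ℕ) (z : ℂ × ℂ) : ℂ × ℂ := (z.1 ^ p, z.2)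

theorem powM_ne (p : ℕ) (z : ℂ × ℂ) (hz : z ≠ 0) : powM p z ≠ 0 := by
  intro h
  apply hz
  have h1 : z.1 ^ p = 0 := congrArg Prod.fst h
  have h2 : z.2 = 0 := congrArg Prod.snd h
  exact Prod.ext (eq_zero_of_pow_eq_zero h1) h2

/-- moving the power from one coordinate to the other -/
theorem move_pow (p : ℕ) (B : Set Y) (hB : IsClosed B) (a b : Y → ℂ) (ha : Continuous a)
    (hb : Continuous b) (hab : ∀ x ∈ B, a x ≠ 0 ∨ b x ≠ 0)
    (Φ : Y → ℂ × ℂ) (hΦ : Continuous Φ) (hΦ0 : ∀ x, Φ x ≠ 0) (hΦB : ∀ x ∈ B, Φ x = (a x, b x ^ p)) :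
    ∃ Ψ : Y → ℂ × ℂ, Continuous Ψ ∧ (∀ x, Ψ x ≠ 0) ∧ ∀ x ∈ B, Ψ x = (a x ^ p, b x) := by
  have hc : Continuous (fun t : ℝ => -Complex.exp (Real.pi * t * Complex.I)) := by fun_prop
  obtain ⟨Ψ, h1, h2, h3⟩ := hom_ext B hB
    (fun x t => rotA (-Complex.exp (Real.pi * t * Complex.I))
      (powM p (rotA (-Complex.exp (Real.pi * t * Complex.I)) (a x, b x)))) (by
      have ha' : Continuous (fun q : Y × ℝ => a q.1) := ha.comp continuous_fst
      have hb' : Continuous (fun q : Y × ℝ => b q.1) := hb.comp continuous_fst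
      unfold rotA powM
      fun_prop) (by
      intro x hx t _
      have hne : -Complex.exp (Real.pi * t * Complex.I) ≠ 0 := neg_ne_zero.2 (Complex.exp_ne_zero _)
      apply rotA_ne _ hne
      apply powM_ne
      apply rotA_ne _ hne
      intro h
      rcases hab x hx with h' | h'
      · exact h' (congrArg Prod.fst h)
      · exact h' (congrArg Prod.snd h)) Φ hΦ hΦ0 (by
      intro x hx
      rw [hΦB x hx]
      simp only [rotA, powM, Complex.ofReal_zero, mul_zero, zero_mul, Complex.exp_zero]
      ext <;> ring_nf)
  refine ⟨Ψ, h1, h2, fun x hx => ?_⟩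
  rw [h3 x hx]
  simp only [rotA, powM, Complex.ofReal_one, mul_one, Complex.exp_pi_mul_I]
  ext <;> ring_nf

end Homotopy

section Induct
variable {P : Type*} [MetricSpace P] [CompactSpace P]

/-- Local `p`-th root data for `f`. -/
def RootData (p : ℕ) (f : P → ℂ) : Prop :=
  ∃ (G : P → ℂ) (O : Set P) (g : P → ℂ), Continuous G ∧ IsOpen O ∧ ContinuousOn g O ∧
    (∀ x ∈ O, g x ^ p = G x) ∧ (∀ x, G x = 0 → x ∈ O) ∧
    ∀ x, 1 ≤ ‖f x‖ → 0 < (G x * (starRingEnd ℂ) (f x)).re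

theorem ext_one (f f' : P → ℂ) (hf : Continuous f) (hf' : Continuous f') (G' : P → ℂ)
    (hG : Continuous G') (hG0 : ∀ x, G' x ≠ 0)
    (hGf : ∀ x, 1 ≤ ‖f' x‖ → 0 < (G' x * (starRingEnd ℂ) (f' x)).re) : Ext f f' := by
  have hB : IsClosed {q : P × P | 1 ≤ ‖f q.1‖ ∨ 1 ≤ ‖f' q.2‖} :=
    (isClosed_le continuous_const (hf.comp continuous_fst).norm).union
      (isClosed_le continuous_const (hf'.comp continuous_snd).norm)
  obtain ⟨Ψ, h1, h2, h3⟩ := hom_ext _ hB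
    (fun q t => (f q.1, (1 - (t:ℂ)) * G' q.2 + t * f' q.2)) (by fun_prop) (by
      intro q hq t ht h
      have e1 : f q.1 = 0 := congrArg Prod.fst h
      have e2 : (1 - (t:ℂ)) * G' q.2 + t * f' q.2 = 0 := congrArg Prod.snd h
      rcases hq with hq | hq
      · rw [e1] at hq; norm_num at hq
      · exact seg_ne _ _ (hGf _ hq) t ht e2)
    (fun q => (f q.1, G' q.2)) (by fun_prop) (by
      intro q h
      exact hG0 q.2 (congrArg Prod.snd h)) (by intro q _; simp)
  exact ⟨Ψ, h1, h2, fun q hq => by rw [h3 q hq]; simp⟩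

theorem ext_step (p : ℕ) (hp : p ≠ 0) (f f' : P → ℂ) (hf : Continuous f) (hf' : Continuous f')
    (hR : RootData p f) (hE : ∀ g : P → ℂ, Continuous g → Ext g (fun x => f' x ^ p)) : Ext f f' := by
  obtain ⟨G, O, g, hG, hO, hg, hgG, hZO, hGf⟩ := hR
  have hZ : IsClosed {x | G x = 0} := isClosed_eq hG continuous_const
  have hU : IsOpen (O ∩ {x | ‖f x‖ < 1}) := hO.inter (isOpen_lt hf.norm continuous_const)
  have hZU : {x | G x = 0} ⊆ O ∩ {x | ‖f x‖ < 1} := by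
    intro x hx
    refine ⟨hZO x hx, ?_⟩
    by_contra hc
    have hx' : G x = 0 := hx
    have := hGf x (not_lt.1 hc)
    rw [hx'] at this
    simp at this
  obtain ⟨V, hVo, hZV, hVU⟩ := normal_exists_closure_subset hZ hU hZU
  set W := closure V with hW
  have hWc : IsClosed W := isClosed_closure
  have hVW : V ⊆ W := subset_closure
  have hgW : ContinuousOn g W := hg.mono (fun x hx => (hVU hx).1)
  have hgne : ∀ x ∈ W \ V, g x ≠ 0 := by
    intro x hx h0
    apply hx.2
    apply hZV
    show G x = 0
    rw [← hgG x (hVU hx.1).1, h0, zero_pow hp]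
  obtain ⟨C, hC0, hC⟩ : ∃ C : ℝ, 0 < C ∧ ∀ x ∈ W \ V, 1 ≤ C * ‖g x‖ := by
    have hcomp : IsCompact (W \ V) := (hWc.sdiff hVo).isCompact
    rcases (W \ V).eq_empty_or_nonempty with he | hne
    · exact ⟨1, one_pos, by rw [he]; simp⟩
    · obtain ⟨x0, hx0, hm⟩ := hcomp.exists_isMinOn hne ((hgW.mono sdiff_subset).norm)
      have hpos : 0 < ‖g x0‖ := norm_pos_iff.2 (hgne x0 hx0)
      refine ⟨‖g x0‖⁻¹, by positivity, fun x hx => ?_⟩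
      have := hm hx
      simp only [mem_ofPred_eq] at this
      rw [inv_mul_eq_div, le_div_iff₀ hpos]; linarith
  obtain ⟨gt, hgt⟩ : ∃ gt : C(P, ℂ), ∀ x ∈ W, gt x = C * g x := by
    obtain ⟨gt, hgt⟩ := ContinuousMap.exists_restrict_eq hWc
      (⟨fun x : W => (C:ℂ) * g x, continuous_const.mul hgW.domRestrict⟩ : C(W, ℂ))
    refine ⟨gt, fun x hx => ?_⟩
    have := congrArg (fun φ : C(W, ℂ) => φ ⟨x, hx⟩) hgt
    simpa using this
  have hgt1 : ∀ x ∈ W \ V, 1 ≤ ‖gt x‖ := by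
    intro x hx
    rw [hgt x hx.1, norm_mul, Complex.norm_real, Real.norm_of_nonneg hC0.le]
    exact hC x hx
  have hpw : ∀ x, 1 ≤ ‖f' x‖ → 1 ≤ ‖f' x ^ p‖ := by
    intro x hx; rw [norm_pow]; exact one_le_pow₀ hx
  obtain ⟨Φ, hΦ1, hΦ2, hΦ3⟩ := hE gt gt.continuous
  have hB : ∀ f : P → ℂ, Continuous f → IsClosed {q : P × P | 1 ≤ ‖f q.1‖ ∨ 1 ≤ ‖f' q.2‖} := fun f hf =>
    (isClosed_le continuous_const (hf.comp continuous_fst).norm).union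
      (isClosed_le continuous_const (hf'.comp continuous_snd).norm)
  obtain ⟨Ψ, hΨ1, hΨ2, hΨ3⟩ := move_pow p _ (hB gt gt.continuous) (fun q : P × P => gt q.1)
    (fun q => f' q.2) (by fun_prop) (by fun_prop) (by
      rintro q (hq | hq)
      · left; intro h
        rw [show gt q.1 = 0 from h] at hq; norm_num at hq
      · right; intro h
        rw [show f' q.2 = 0 from h] at hq; norm_num at hq) Φ hΦ1 hΦ2 (by
      rintro q (hq | hq)
      · exact hΦ3 q (Or.inl hq)
      · exact hΦ3 q (Or.inr (hpw _ hq)))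
  classical
  set Θ : P × P → ℂ × ℂ := fun q => if q.1 ∈ W then Ψ q else ((C:ℂ) ^ p * G q.1, f' q.2) with hΘ
  have hGW : ∀ q : P × P, q.1 ∈ W → (1 ≤ ‖gt q.1‖ ∨ 1 ≤ ‖f' q.2‖) →
      Ψ q = ((C:ℂ) ^ p * G q.1, f' q.2) := by
    intro q hq h
    rw [hΨ3 q h]
    simp only [hgt _ hq, mul_pow, hgG _ (hVU hq).1]
  have hΘV : ∀ q : P × P, q.1 ∉ V → Θ q = ((C:ℂ) ^ p * G q.1, f' q.2) := by
    intro q hq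
    by_cases h : q.1 ∈ W
    · simp only [hΘ, if_pos h]
      exact hGW q h (Or.inl (hgt1 _ ⟨h, hq⟩))
    · simp only [hΘ, if_neg h]
  have hΘc : Continuous Θ := by
    rw [← continuousOn_univ]
    have hun : (univ : Set (P × P)) = (Prod.fst ⁻¹' W) ∪ (Prod.fst ⁻¹' Vᶜ) := by
      ext q
      simp only [mem_univ, mem_union, mem_preimage, mem_compl_iff, true_iff]
      by_cases h : q.1 ∈ V
      · exact Or.inl (hVW h)
      · exact Or.inr h
    rw [hun]
    apply ContinuousOn.union_of_isClosed
    · exact hΨ1.continuousOn.congr (fun q hq => if_pos hq)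
    · refine ContinuousOn.congr (f := fun q : P × P => ((C:ℂ) ^ p * G q.1, f' q.2)) ?_ (fun q hq => hΘV q hq)
      exact Continuous.continuousOn (by fun_prop)
    · exact hWc.preimage continuous_fst
    · exact hVo.isClosed_compl.preimage continuous_fst
  have hΘ0 : ∀ q, Θ q ≠ 0 := by
    intro q
    by_cases h : q.1 ∈ V
    · simp only [hΘ, if_pos (hVW h)]; exact hΨ2 q
    · rw [hΘV q h]
      intro h0
      have h1 : (C:ℂ) ^ p * G q.1 = 0 := congrArg Prod.fst h0
      rcases mul_eq_zero.1 h1 with h1 | h1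
      · have := eq_zero_of_pow_eq_zero h1
        exact hC0.ne' (by exact_mod_cast this)
      · exact h (hZV h1)
  obtain ⟨Ξ, h1, h2, h3⟩ := hom_ext _ (hB f hf)
    (fun q t => ((1 - (t:ℂ)) * ((C:ℂ) ^ p * G q.1) + t * f q.1, f' q.2)) (by fun_prop) (by
      intro q hq t ht h
      have e1 : (1 - (t:ℂ)) * ((C:ℂ) ^ p * G q.1) + t * f q.1 = 0 := congrArg Prod.fst h
      have e2 : f' q.2 = 0 := congrArg Prod.snd h
      rcases hq with hq | hq
      · refine seg_ne _ _ ?_ t ht e1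
        have := hGf _ hq
        have hc : (C:ℂ) ^ p * G q.1 * (starRingEnd ℂ) (f q.1)
          = ((C ^ p : ℝ) : ℂ) * (G q.1 * (starRingEnd ℂ) (f q.1)) := by push_cast; ring
        rw [hc, Complex.re_ofReal_mul]
        positivity
      · rw [e2] at hq; norm_num at hq)
    Θ hΘc hΘ0 (by
      intro q hq
      have : Θ q = ((C:ℂ) ^ p * G q.1, f' q.2) := by
        by_cases h : q.1 ∈ V
        · simp only [hΘ, if_pos (hVW h)]
          refine hGW q (hVW h) (Or.inr ?_)
          rcases hq with hq | hq
          · exact absurd hq (not_le.2 (hVU (hVW h)).2)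
          · exact hq
        · exact hΘV q h
      rw [this]; simp)
  exact ⟨Ξ, h1, h2, fun q hq => by rw [h3 q hq]; simp⟩

theorem ext_all (hR : ∀ p : ℕ, p.Prime → ∀ f : P → ℂ, Continuous f → RootData p f) (d : ℕ) :
    d ≠ 0 → ∀ f' : P → ℂ, Continuous f' → (∃ G' : P → ℂ, Continuous G' ∧ (∀ x, G' x ≠ 0) ∧
      ∀ x, 1 ≤ ‖f' x‖ → 0 < (G' x * (starRingEnd ℂ) (f' x ^ d)).re) →
    ∀ f : P → ℂ, Continuous f → Ext f f' := by
  induction d using induction_on_primes with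
  | zero => intro h; exact absurd rfl h
  | one =>
    rintro _ f' hf' ⟨G', h1, h2, h3⟩ f hf
    exact ext_one f f' hf hf' G' h1 h2 (by simpa using h3)
  | prime_mul p a hp ih =>
    rintro h0 f' hf' ⟨G', h1, h2, h3⟩ f hf
    refine ext_step p hp.ne_zero f f' hf hf' (hR p hp f hf) (fun g hg => ?_)
    refine ih (right_ne_zero_of_mul h0) _ (hf'.pow p) ⟨G', h1, h2, fun x hx => ?_⟩ g hg
    rw [Pi.pow_apply, ← pow_mul]
    refine h3 x ?_
    rw [Pi.pow_apply, norm_pow] at hx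
    by_contra hc
    exact absurd hx (not_le.2 (pow_lt_one₀ (norm_nonneg _) (not_le.1 hc) hp.ne_zero))

end Induct
end MeanDimPaper

namespace MeanDimPaper

section Arg

noncomputable def kap (z w : ℂ) : ℤ :=
  if z.re ≤ 0 then (if 0 ≤ w.im then 1 else 0) - (if 0 ≤ z.im then 1 else 0) else 0

theorem arg_kap (z w : ℂ) (hz : z ≠ 0) (hw : w ≠ 0) (h : 0 < (w / z).re) :
    w.arg - z.arg - 2 * Real.pi * kap z w = (w / z).arg := by
  have hpi := Real.pi_pos
  have ht : |(w / z).arg| < Real.pi / 2 := Complex.abs_arg_lt_pi_div_two_iff.2 (Or.inl h)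
  rw [abs_lt] at ht
  have e1 : ((w.arg : ℝ) : Real.Angle) = ((z.arg + (w / z).arg : ℝ) : Real.Angle) := by
    have := Complex.arg_mul_coe_angle hz (div_ne_zero hw hz)
    rw [mul_div_cancel₀ w hz] at this
    rw [this]; simp
  obtain ⟨m, hm⟩ := Real.Angle.angle_eq_iff_two_pi_dvd_sub.1 e1
  have a1 := Complex.arg_le_pi w
  have a2 := Complex.neg_pi_lt_arg w
  have b1 := Complex.arg_le_pi z
  have b2 := Complex.neg_pi_lt_arg z
  have hwi : 0 ≤ w.im ↔ 0 ≤ w.arg := Complex.arg_nonneg_iff.symm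
  have hzi : 0 ≤ z.im ↔ 0 ≤ z.arg := Complex.arg_nonneg_iff.symm
  have hzr : z.re ≤ 0 ↔ Real.pi / 2 ≤ |z.arg| := by
    rw [← not_lt, ← not_lt, Complex.abs_arg_lt_pi_div_two_iff]
    simp [hz]
  suffices hk : kap z w = m by rw [hk]; linarith
  have mlt : ∀ k : ℤ, 2 * Real.pi * (m:ℝ) < 2 * Real.pi * (k:ℝ) → m < k := by
    intro k hk
    have := lt_of_mul_lt_mul_left hk (by positivity)
    exact_mod_cast this
  have mgt : ∀ k : ℤ, 2 * Real.pi * (k:ℝ) < 2 * Real.pi * (m:ℝ) → k < m := by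
    intro k hk
    have := lt_of_mul_lt_mul_left hk (by positivity)
    exact_mod_cast this
  have key : ∀ k : ℤ, 2 * Real.pi * (k - 1) < 2 * Real.pi * m → 2 * Real.pi * m < 2 * Real.pi * (k + 1) → k = m := by
    intro k h1 h2
    have h1' := mgt (k - 1) (by push_cast; exact h1)
    have h2' := mlt (k + 1) (by push_cast; exact h2)
    omega
  unfold kap
  by_cases hr : z.re ≤ 0
  · rw [if_pos hr]
    have hr' := hzr.1 hr
    by_cases hi : 0 ≤ z.im
    · have hi' := hzi.1 hi
      rw [abs_of_nonneg hi'] at hr'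
      by_cases hj : 0 ≤ w.im
      · have hj' := hwi.1 hj
        rw [if_pos hi, if_pos hj]
        apply key <;> push_cast <;> linarith
      · have hj' := not_le.1 (mt hwi.2 hj)
        rw [if_pos hi, if_neg hj]
        apply key <;> push_cast <;> linarith
    · have hi' := not_le.1 (mt hzi.2 hi)
      rw [abs_of_neg hi'] at hr'
      by_cases hj : 0 ≤ w.im
      · have hj' := hwi.1 hj
        rw [if_neg hi, if_pos hj]
        apply key <;> push_cast <;> linarith
      · have hj' := not_le.1 (mt hwi.2 hj)
        rw [if_neg hi, if_neg hj]
        apply key <;> push_cast <;> linarith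
  · rw [if_neg hr]
    have hr' := not_le.1 (mt hzr.2 hr)
    rw [abs_lt] at hr'
    apply key <;> push_cast <;> linarith

noncomputable def tau (z : ℂ) : ℝ := z.arg / (2 * Real.pi)

def Far (z w : ℂ) : Prop := (1/2 ≤ |z.re| ∧ 1/2 ≤ |w.re|) ∨ (1/2 ≤ |z.im| ∧ 1/2 ≤ |w.im|)

theorem tau_close (ε : ℝ) (hε : 0 < ε) : ∃ δ > 0, ∀ z w : ℂ, 1 ≤ ‖z‖ → ‖w - z‖ < δ →
    Far z w ∧ |tau w - kap z w - tau z| ≤ ε := by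
  have hpi := Real.pi_pos
  have hc : ContinuousAt Complex.arg 1 := Complex.continuousAt_arg Complex.one_mem_slitPlane
  obtain ⟨δ, hδ, h⟩ := Metric.continuousAt_iff.1 hc (2 * Real.pi * ε) (by positivity)
  refine ⟨min δ (1/10), by positivity, fun z w hz hw => ?_⟩
  have hw1 : ‖w - z‖ < δ := hw.trans_le (min_le_left _ _)
  have hw2 : ‖w - z‖ < 1/10 := hw.trans_le (min_le_right _ _)
  have hz0 : z ≠ 0 := by rintro rfl; norm_num at hz
  have hw0 : w ≠ 0 := by
    rintro rfl
    rw [zero_sub, norm_neg] at hw2; linarith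
  have hq : ‖w / z - 1‖ ≤ ‖w - z‖ := by
    have : w / z - 1 = (w - z) / z := by field_simp
    rw [this, norm_div]
    exact div_le_self (norm_nonneg _) hz
  have hre : 0 < (w / z).re := by
    have := Complex.abs_re_le_norm (w / z - 1)
    rw [Complex.sub_re, Complex.one_re, abs_le] at this
    linarith
  constructor
  · have r1 := Complex.abs_re_le_norm (w - z)
    have r2 := Complex.abs_im_le_norm (w - z)
    rw [Complex.sub_re] at r1
    rw [Complex.sub_im] at r2
    have h1 : 6/10 ≤ |z.re| ∨ 6/10 ≤ |z.im| := by
      by_contra hcon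
      push Not at hcon
      have h3 : 1 ≤ ‖z‖ ^ 2 := one_le_pow₀ hz
      rw [Complex.sq_norm, Complex.normSq_apply] at h3
      have h4 : z.re * z.re = |z.re| * |z.re| := (abs_mul_abs_self _).symm
      have h5 : z.im * z.im = |z.im| * |z.im| := (abs_mul_abs_self _).symm
      rw [h4, h5] at h3
      nlinarith [abs_nonneg z.re, abs_nonneg z.im]
    rcases h1 with h1 | h1
    · left
      have := abs_sub_abs_le_abs_sub z.re w.re
      rw [abs_sub_comm] at this
      constructor <;> linarith
    · right
      have := abs_sub_abs_le_abs_sub z.im w.im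
      rw [abs_sub_comm] at this
      constructor <;> linarith
  · have h1 := arg_kap z w hz0 hw0 hre
    have h2 := h (x := w / z) (by rw [dist_eq_norm]; linarith)
    rw [Complex.arg_one, dist_zero_right, Real.norm_eq_abs] at h2
    have : tau w - kap z w - tau z = (w / z).arg / (2 * Real.pi) := by
      rw [← h1]; unfold tau; field_simp; ring
    rw [this, abs_div, abs_of_pos (by positivity : 0 < 2 * Real.pi), div_le_iff₀ (by positivity)]
    linarith

noncomputable def ep (t : ℝ) : ℂ := Complex.exp ((2 * Real.pi * t : ℝ) * Complex.I)

theorem ep_add (a b : ℝ) : ep (a + b) = ep a * ep b := by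
  unfold ep; rw [← Complex.exp_add]; push_cast; ring_nf

theorem ep_int (n : ℤ) : ep n = 1 := by
  unfold ep; rw [Complex.exp_eq_one_iff]; exact ⟨n, by push_cast; ring⟩

theorem ep_norm (a : ℝ) : ‖ep a‖ = 1 := Complex.norm_exp_ofReal_mul_I _

theorem ep_ne (a : ℝ) : ep a ≠ 0 := Complex.exp_ne_zero _

theorem ep_pow (a : ℝ) (k : ℕ) : ep a ^ k = ep (k * a) := by
  unfold ep; rw [← Complex.exp_nat_mul]; push_cast; ring_nf

theorem ep_cont : Continuous ep := by unfold ep; fun_prop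

theorem ep_sub_one (a : ℝ) : ‖ep a - 1‖ ≤ 2 * Real.pi * |a| := by
  have := Real.norm_exp_I_mul_ofReal_sub_one_le (x := 2 * Real.pi * a)
  unfold ep
  rw [mul_comm]
  refine this.trans ?_
  rw [Real.norm_eq_abs, abs_mul, abs_of_pos (by positivity)]

theorem ep_one (a : ℝ) (h : ep a = 1) : ∃ n : ℤ, a = n := by
  unfold ep at h
  rw [Complex.exp_eq_one_iff] at h
  obtain ⟨n, hn⟩ := h
  refine ⟨n, ?_⟩
  have h2 : ((2 * Real.pi * a : ℝ) : ℂ) = ((2 * Real.pi * n : ℝ) : ℂ) := by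
    apply mul_right_cancel₀ Complex.I_ne_zero
    rw [hn]; push_cast; ring
  have h3 : 2 * Real.pi * a = 2 * Real.pi * n := by exact_mod_cast h2
  exact mul_left_cancel₀ (by positivity) h3

theorem ep_re (a : ℝ) : (ep a).re = Real.cos (2 * Real.pi * a) := by
  unfold ep; rw [Complex.exp_ofReal_mul_I_re]

theorem ep_conj (a : ℝ) : (starRingEnd ℂ) (ep a) = ep (-a) := by
  unfold ep
  rw [← Complex.exp_conj, map_mul, Complex.conj_ofReal, Complex.conj_I]
  push_cast
  ring_nf

theorem polar (z : ℂ) : z = ‖z‖ * ep (tau z) := by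
  unfold ep tau
  have : 2 * Real.pi * (z.arg / (2 * Real.pi)) = z.arg := by
    have := Real.pi_pos
    field_simp
  rw [this, Complex.norm_mul_exp_arg_mul_I]

end Arg
end MeanDimPaper

namespace MeanDimPaper

section Coc
variable {P : Type*} [MetricSpace P]

/-- integral cocycle data modulo `m` trivialising `d` times the obstruction of `f` -/
def CocData (m : ℤ) (d : ℕ) (f : P → ℂ) : Prop :=
  ∃ η > 0, ∃ e : P → P → ℤ,
    (∀ x y z, dist x y < η → dist y z < η → dist x z < η → m ∣ e y z - e x z + e x y) ∧
    ∀ x y, dist x y < η → Far (f x) (f y) → e x y = d * kap (f x) (f y)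

theorem small_pair {η : ℝ} (hη : 0 < η) {x y : P} (h : dist x y < η) : Small η [x, y] := by
  intro a ha b hb
  simp only [List.mem_cons, List.not_mem_nil, or_false] at ha hb
  rcases ha with rfl | rfl <;> rcases hb with rfl | rfl <;> simp_all [dist_comm]

theorem small_triple {η : ℝ} (hη : 0 < η) {x y z : P} (h : dist x y < η) (h' : dist y z < η)
    (h'' : dist x z < η) : Small η [x, y, z] := by
  intro a ha b hb
  simp only [List.mem_cons, List.not_mem_nil, or_false] at ha hb
  rcases ha with rfl | rfl | rfl <;> rcases hb with rfl | rfl | rfl <;> simp_all [dist_comm]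

/-- the list of real functions attached to `f` -/
def two (f : P → ℂ) : List (P → ℝ) := [fun x => (f x).re, fun x => -(f x).im]

theorem not_ess (F : Type*) [Field F] (f : P → ℂ) (h : ¬ Ess F (two f)) :
    ∃ η > 0, ∃ c : P → P → F,
      (∀ x y, dist x y < η → Far (f x) (f y) → c x y = 0) ∧
      ∀ x y z, dist x y < η → dist y z < η → dist x z < η →
        ((kap (f y) (f z) : F) - kap (f x) (f z) + kap (f x) (f y)) = c y z - c x z + c x y := by
  classical
  unfold Ess at h
  push Not at h
  obtain ⟨η, hη, c, hc0, hc⟩ := h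
  refine ⟨η, hη, fun x y => c [x, y], fun x y hxy hF => ?_, fun x y z hxy hyz hxz => ?_⟩
  · refine hc0 [x, y] (small_pair hη hxy) rfl ?_
    rcases hF with ⟨h1, h2⟩ | ⟨h1, h2⟩
    · refine ⟨farSet (fun x => (f x).re), by simp [two], ?_⟩
      intro a ha
      simp only [List.mem_cons, List.not_mem_nil, or_false] at ha
      rcases ha with rfl | rfl
      · exact h1
      · exact h2
    · refine ⟨farSet (fun x => -(f x).im), by simp [two], ?_⟩
      intro a ha
      simp only [List.mem_cons, List.not_mem_nil, or_false] at ha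
      rcases ha with rfl | rfl
      · show 1/2 ≤ |-(f a).im|
        rw [abs_neg]; exact h1
      · show 1/2 ≤ |-(f a).im|
        rw [abs_neg]; exact h2
  · have h3 := hc [x, y, z] (small_triple hη hxy hyz hxz) rfl
    simp only [dl_cons, dl_nil, two, List.map_cons, List.map_nil, cup, cupOne, List.length_cons,
      List.length_nil, zero_add, if_true, mul_one, sub_zero] at h3
    have h4 : c [y, z] - c [x, z] + c [x, y] = c [y, z] - (c [x, z] - c [x, y]) := by ring
    rw [h4, ← h3]
    simp only [kap, ind, neg_nonpos]
    split_ifs <;> simp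

theorem coc_p (p : ℕ) [Fact p.Prime] (f : P → ℂ) (h : ¬ Ess (ZMod p) (two f)) :
    CocData (p:ℤ) 1 f := by
  obtain ⟨η, hη, c, h1, h2⟩ := not_ess (ZMod p) f h
  refine ⟨η, hη, fun x y => kap (f x) (f y) - ((c x y).val : ℤ), fun x y z a b c' => ?_, fun x y hxy hF => ?_⟩
  · rw [← ZMod.intCast_zmod_eq_zero_iff_dvd]
    push_cast
    simp only [ZMod.natCast_val, ZMod.cast_id', id]
    have := h2 x y z a b c'
    linear_combination this
  · simp [h1 x y hxy hF]

theorem coc_q [CompactSpace P] (f : P → ℂ) (h : ¬ Ess ℚ (two f)) :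
    ∃ d : ℕ, d ≠ 0 ∧ CocData 0 d f := by
  classical
  obtain ⟨η, hη, c, h1, h2⟩ := not_ess ℚ f h
  rcases isEmpty_or_nonempty P with hP | hP
  · exact ⟨1, one_ne_zero, 1, one_pos, fun _ _ => 0, fun x => hP.elim x, fun x => hP.elim x⟩
  obtain ⟨t, -, ht, hcov⟩ := (isCompact_univ (X := P)).finite_cover_balls (e := η/6) (by positivity)
  have hcen : ∀ x : P, ∃ y : t, dist x y < η / 6 := by
    intro x
    have := hcov (mem_univ x)
    simp only [mem_iUnion, Metric.mem_ball] at this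
    obtain ⟨y, hy, hd⟩ := this
    exact ⟨⟨y, hy⟩, hd⟩
  choose cen hcen using hcen
  haveI : Finite t := ht
  let K : P → t × (Prop × Prop × Prop × Prop) := fun x =>
    (cen x, (f x).re ≤ 0, 0 ≤ (f x).im, 1/2 ≤ |(f x).re|, 1/2 ≤ |(f x).im|)
  let r : P → P := fun x => Function.invFun K (K x)
  have hr : ∀ x, K (r x) = K x := fun x => Function.invFun_eq ⟨x, rfl⟩
  have hrd : ∀ x, dist x (r x) < η / 3 := by
    intro x
    have e1 : cen (r x) = cen x := congrArg Prod.fst (hr x)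
    have e2 := hcen x
    have e3 := hcen (r x)
    rw [e1] at e3
    have := dist_triangle_right x (r x) (cen x)
    linarith
  have hrdd : ∀ x y, dist x y < η / 3 → dist (r x) (r y) < η := by
    intro x y hxy
    have a := hrd x
    have b := hrd y
    have := dist_triangle4 (r x) x y (r y)
    rw [dist_comm (r x) x] at this
    linarith
  have k1 : ∀ x, ((f (r x)).re ≤ 0) = ((f x).re ≤ 0) := fun x => congrArg (fun q => q.2.1) (hr x)
  have k2 : ∀ x, (0 ≤ (f (r x)).im) = (0 ≤ (f x).im) := fun x => congrArg (fun q => q.2.2.1) (hr x)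
  have k3 : ∀ x, (1/2 ≤ |(f (r x)).re|) = (1/2 ≤ |(f x).re|) := fun x => congrArg (fun q => q.2.2.2.1) (hr x)
  have k4 : ∀ x, (1/2 ≤ |(f (r x)).im|) = (1/2 ≤ |(f x).im|) := fun x => congrArg (fun q => q.2.2.2.2) (hr x)
  have hkap : ∀ x y, kap (f (r x)) (f (r y)) = kap (f x) (f y) := by
    intro x y
    simp only [kap, k1, k2]
  have hfar : ∀ x y, Far (f (r x)) (f (r y)) = Far (f x) (f y) := by
    intro x y
    simp only [Far, k3, k4]
  have hfin : (range (fun q : P × P => c (r q.1) (r q.2))).Finite := by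
    have : range (fun q : P × P => c (r q.1) (r q.2)) ⊆
        range (fun q : (t × (Prop × Prop × Prop × Prop)) × (t × (Prop × Prop × Prop × Prop)) =>
          c (Function.invFun K q.1) (Function.invFun K q.2)) := by
      rintro _ ⟨q, rfl⟩
      exact ⟨(K q.1, K q.2), rfl⟩
    exact (Set.finite_range _).subset this
  set S := hfin.toFinset with hS
  set d : ℕ := ∏ q ∈ S, q.den with hd
  have hd0 : d ≠ 0 := Finset.prod_ne_zero_iff.2 (fun q _ => q.den_nz)
  have hintg : ∀ x y, ∃ k : ℤ, (k : ℚ) = d * c (r x) (r y) := by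
    intro x y
    have hm : c (r x) (r y) ∈ S := by
      rw [hS, Set.Finite.mem_toFinset]; exact ⟨(x, y), rfl⟩
    obtain ⟨l, hl⟩ := Finset.dvd_prod_of_mem (fun q : ℚ => q.den) hm
    refine ⟨l * (c (r x) (r y)).num, ?_⟩
    have h5 := Rat.mul_den_eq_num (c (r x) (r y))
    have h6 : (d : ℚ) = ((c (r x) (r y)).den : ℚ) * l := by exact_mod_cast hl
    rw [h6]
    push_cast
    rw [← h5]; ring
  choose k hk using hintg
  refine ⟨d, hd0, η / 3, by positivity, fun x y => d * kap (f x) (f y) - k x y, fun x y z a b c' => ?_,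
    fun x y hxy hF => ?_⟩
  · rw [zero_dvd_iff]
    have := h2 (r x) (r y) (r z) (hrdd _ _ a) (hrdd _ _ b) (hrdd _ _ c')
    simp only [hkap] at this
    have h7 : (((d * kap (f y) (f z) - k y z) - (d * kap (f x) (f z) - k x z)
      + (d * kap (f x) (f y) - k x y) : ℤ) : ℚ) = 0 := by
      push_cast
      rw [hk, hk, hk]
      linear_combination (d:ℚ) * this
    exact_mod_cast h7
  · have : (k x y : ℚ) = 0 := by
      rw [hk, h1 _ _ (hrdd _ _ hxy) (by rw [hfar]; exact hF), mul_zero]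
    have : k x y = 0 := by exact_mod_cast this
    simp [this]

end Coc
end MeanDimPaper

namespace MeanDimPaper

section Roots
variable {P : Type*} [MetricSpace P] [CompactSpace P]

theorem setupPU [Nonempty P] (hP : topDim P ≤ 2) (η : ℝ) (hη : 0 < η) :
    ∃ (n : ℕ) (ρ : ℕ → P → ℝ) (cc : ℕ → P), PU n ρ ∧ (∀ x, (act n ρ x).card ≤ 3) ∧
      ∀ j y, 0 < ρ j y → dist y (cc j) < η := by
  classical
  obtain ⟨n, ρ, h1, h2, h3⟩ := exists_PU 2 hP (range (fun x : P => Metric.ball x η)) (by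
    constructor
    · rintro _ ⟨x, rfl⟩; exact Metric.isOpen_ball
    · rw [sUnion_range]
      exact eq_univ_of_forall (fun x => mem_iUnion.2 ⟨x, Metric.mem_ball_self hη⟩))
  have : ∀ j, ∃ c : P, ∀ y, 0 < ρ j y → dist y c < η := by
    intro j
    by_cases hj : j < n
    · obtain ⟨_, ⟨c, rfl⟩, hc⟩ := h3 j hj
      exact ⟨c, fun y hy => hc y hy⟩
    · refine ⟨Classical.arbitrary P, fun y hy => ?_⟩
      rw [h1.zero j y (not_lt.1 hj)] at hy
      exact absurd hy (lt_irrefl _)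
  choose cc hcc using this
  exact ⟨n, ρ, cc, h1, h2, hcc⟩

theorem unif_tau (f : P → ℂ) (hf : Continuous f) (ε : ℝ) (hε : 0 < ε) :
    ∃ η > 0, ∀ y x : P, dist y x < η → 1 ≤ ‖f y‖ →
      Far (f y) (f x) ∧ |tau (f x) - kap (f y) (f x) - tau (f y)| ≤ ε := by
  obtain ⟨δ, hδ, h⟩ := tau_close ε hε
  obtain ⟨η, hη, h'⟩ := Metric.uniformContinuous_iff.1
    (CompactSpace.uniformContinuous_of_continuous hf) δ hδ
  refine ⟨η, hη, fun y x hxy hy => h _ _ hy ?_⟩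
  rw [← dist_eq_norm, dist_comm]
  exact h' hxy

theorem lemA [Nonempty P] (hP : topDim P ≤ 2) (f : P → ℂ) (hf : Continuous f) (d : ℕ) (hd : d ≠ 0)
    (hC : CocData 0 d f) : ∃ G' : P → ℂ, Continuous G' ∧ (∀ x, G' x ≠ 0) ∧
      ∀ x, 1 ≤ ‖f x‖ → 0 < (G' x * (starRingEnd ℂ) (f x ^ d)).re := by
  obtain ⟨η, hη, e, he, hek⟩ := hC
  have hd' : (0:ℝ) < d := by exact_mod_cast Nat.pos_of_ne_zero hd
  obtain ⟨η₁, hη₁, htau⟩ := unif_tau f hf (1 / (8 * d)) (by positivity)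
  obtain ⟨n, ρ, cc, hρ, -, hcc⟩ := setupPU hP (min (η / 2) η₁) (by positivity)
  have hcc1 : ∀ j y, 0 < ρ j y → dist y (cc j) < η / 2 := fun j y h =>
    (hcc j y h).trans_le (min_le_left _ _)
  have hcc2 : ∀ j y, 0 < ρ j y → dist y (cc j) < η₁ := fun j y h =>
    (hcc j y h).trans_le (min_le_right _ _)
  set A : P → P → ℝ := fun b y => ∑ j ∈ Finset.range n, ρ j y * (d * tau (f (cc j)) - e b (cc j)) with hA
  have hAc : ∀ b, Continuous (A b) := by
    intro b
    have := hρ.cont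
    simp only [hA]
    fun_prop
  have hAA : ∀ b y, dist b y < η / 2 → A y y = A b y + e b y := by
    intro b y hby
    have h1 : (e b y : ℝ) = ∑ j ∈ Finset.range n, ρ j y * e b y := by
      rw [← Finset.sum_mul, hρ.sum, one_mul]
    rw [h1]
    simp only [hA]
    rw [← Finset.sum_add_distrib]
    refine Finset.sum_congr rfl (fun j _ => ?_)
    rcases (hρ.nonneg j y).eq_or_lt with h0 | h0
    · rw [← h0]; ring
    · have h2 := hcc1 j y h0
      have h3 := he b y (cc j) (by linarith) (by linarith)
        (by linarith [dist_triangle b y (cc j)])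
      rw [zero_dvd_iff] at h3
      have h4 : (e y (cc j) : ℝ) - e b (cc j) + e b y = 0 := by exact_mod_cast h3
      linear_combination (-ρ j y) * h4
  have hG : ∀ b y, dist b y < η / 2 → ep (A y y) = ep (A b y) := by
    intro b y hby
    rw [hAA b y hby, ep_add, ep_int, mul_one]
  refine ⟨fun y => ep (A y y), ?_, fun x => ep_ne _, ?_⟩
  · rw [continuous_iff_continuousAt]
    intro b
    have h1 : ContinuousAt (fun y => ep (A b y)) b := (ep_cont.comp (hAc b)).continuousAt
    refine h1.congr ?_
    filter_upwards [Metric.ball_mem_nhds b (by positivity : 0 < η / 2)] with y hy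
    rw [Metric.mem_ball, dist_comm] at hy
    exact (hG b y hy).symm
  · intro y hy
    have hS : |A y y - d * tau (f y)| ≤ 1 / 8 := by
      have h1 : A y y - d * tau (f y) = ∑ j ∈ Finset.range n,
          ρ j y * (d * tau (f (cc j)) - e y (cc j) - d * tau (f y)) := by
        have : d * tau (f y) = ∑ j ∈ Finset.range n, ρ j y * (d * tau (f y)) := by
          rw [← Finset.sum_mul, hρ.sum, one_mul]
        conv_lhs => rw [this]
        simp only [hA]
        rw [← Finset.sum_sub_distrib]
        exact Finset.sum_congr rfl (fun j _ => by ring)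
      rw [h1]
      refine (Finset.abs_sum_le_sum_abs _ _).trans ?_
      have h2 : (1:ℝ) / 8 = ∑ j ∈ Finset.range n, ρ j y * (1 / 8) := by
        rw [← Finset.sum_mul, hρ.sum, one_mul]
      rw [h2]
      refine Finset.sum_le_sum (fun j _ => ?_)
      rw [abs_mul, abs_of_nonneg (hρ.nonneg j y)]
      rcases (hρ.nonneg j y).eq_or_lt with h0 | h0
      · rw [← h0]; simp
      · refine mul_le_mul_of_nonneg_left ?_ h0.le
        obtain ⟨h3, h4⟩ := htau y (cc j) (hcc2 j y h0) hy
        rw [hek y (cc j) (by linarith [hcc1 j y h0]) h3]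
        have : (d:ℝ) * tau (f (cc j)) - ((d * kap (f y) (f (cc j)) : ℤ) : ℝ) - d * tau (f y)
          = d * (tau (f (cc j)) - kap (f y) (f (cc j)) - tau (f y)) := by push_cast; ring
        rw [this, abs_mul, abs_of_pos hd']
        calc (d:ℝ) * _ ≤ d * (1 / (8 * d)) := mul_le_mul_of_nonneg_left h4 hd'.le
          _ = 1 / 8 := by field_simp
    have hfd : f y ^ d = ((‖f y‖ ^ d : ℝ) : ℂ) * ep (d * tau (f y)) := by
      conv_lhs => rw [polar (f y)]
      rw [mul_pow, ep_pow]; push_cast; ring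
    rw [hfd, map_mul, Complex.conj_ofReal, ep_conj]
    have : ep (A y y) * (((‖f y‖ ^ d : ℝ) : ℂ) * ep (-(d * tau (f y))))
      = ((‖f y‖ ^ d : ℝ) : ℂ) * ep (A y y - d * tau (f y)) := by
      rw [sub_eq_add_neg, ep_add]; ring
    rw [this, Complex.re_ofReal_mul, ep_re]
    have hp := Real.pi_pos
    have h5 : 0 < ‖f y‖ ^ d := by positivity
    refine mul_pos h5 (Real.cos_pos_of_mem_Ioo ?_)
    rw [abs_le] at hS
    constructor <;> nlinarith

/-- generic perturbation -/
theorem generic (n : ℕ) (t : ℕ → ℝ) (ε : ℝ) (hε : 0 < ε) :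
    ∃ t' : ℕ → ℝ, (∀ j < n, |t' j - t j| ≤ ε) ∧
      ∀ j k, j ≠ k → ∀ m : ℤ, 2 * (t' j - t' k) ≠ m := by
  have hq : ∀ j, ∃ q : ℚ, |(q:ℝ) - t j| ≤ ε / 2 := by
    intro j
    obtain ⟨q, h1, h2⟩ := exists_rat_btwn (show t j - ε / 2 < t j + ε / 2 by linarith)
    exact ⟨q, by rw [abs_le]; constructor <;> linarith⟩
  choose q hq using hq
  obtain ⟨N, hN⟩ := exists_nat_gt ((n:ℝ) * 2 / (ε / 2))
  have hN0 : (0:ℝ) < N := lt_of_le_of_lt (by positivity) hN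
  have hs2 : Real.sqrt 2 ≤ 2 := by
    rw [Real.sqrt_le_left (by norm_num)]; norm_num
  refine ⟨fun j => q j + j * Real.sqrt 2 / N, fun j hj => ?_, fun j k hjk m hm => ?_⟩
  · have h1 : |(j:ℝ) * Real.sqrt 2 / N| ≤ ε / 2 := by
      rw [abs_of_nonneg (by positivity), div_le_iff₀ hN0]
      rw [div_lt_iff₀ (by positivity)] at hN
      have : (j:ℝ) ≤ n := by exact_mod_cast hj.le
      have : (j:ℝ) * Real.sqrt 2 ≤ n * 2 := mul_le_mul this hs2 (by positivity) (by positivity)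
      linarith
    have h2 := hq j
    rw [abs_le] at *
    constructor <;> linarith
  · have hjk' : ((j:ℝ) - k) ≠ 0 := sub_ne_zero.2 (by exact_mod_cast hjk)
    apply irrational_sqrt_two
    refine ⟨((m:ℚ) / 2 - q j + q k) * N / ((j:ℚ) - k), ?_⟩
    push_cast
    rw [div_eq_iff hjk']
    field_simp at hm
    field_simp
    linear_combination -hm

theorem lemB [Nonempty P] (hP : topDim P ≤ 2) (p : ℕ) (hp : p ≠ 0) (f : P → ℂ) (hf : Continuous f)
    (hC : CocData (p:ℤ) 1 f) : RootData p f := by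
  classical
  obtain ⟨η, hη, e, he, hek⟩ := hC
  have hpi := Real.pi_pos
  have hp' : (0:ℝ) < p := by exact_mod_cast Nat.pos_of_ne_zero hp
  have hp1 : (1:ℝ) ≤ p := by exact_mod_cast Nat.pos_of_ne_zero hp
  obtain ⟨r, hr, hpow⟩ : ∃ r > 0, ∀ u : ℂ, ‖u - 1‖ < r → 0 < (u ^ p).re := by
    have hc : ContinuousAt (fun u : ℂ => (u ^ p).re) 1 := by fun_prop
    have := hc.eventually (lt_mem_nhds (show (0:ℝ) < ((1:ℂ) ^ p).re by simp))
    obtain ⟨r, hr, h⟩ := Metric.eventually_nhds_iff.1 this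
    exact ⟨r, hr, fun u hu => h (by rwa [dist_eq_norm])⟩
  set ε := r / (8 * Real.pi) with hε
  have hε0 : 0 < ε := by positivity
  obtain ⟨η₁, hη₁, htau⟩ := unif_tau f hf ε hε0
  obtain ⟨n, ρ, cc, hρ, hcard, hcc⟩ := setupPU hP (min (η / 2) η₁) (by positivity)
  have hcc1 : ∀ j y, 0 < ρ j y → dist y (cc j) < η / 2 := fun j y h =>
    (hcc j y h).trans_le (min_le_left _ _)
  have hcc2 : ∀ j y, 0 < ρ j y → dist y (cc j) < η₁ := fun j y h =>
    (hcc j y h).trans_le (min_le_right _ _)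
  obtain ⟨t, ht, hgen⟩ := generic n (fun j => tau (f (cc j))) ε hε0
  set s : P → P → ℂ := fun b y => ∑ j ∈ Finset.range n, (ρ j y : ℂ) * ep ((t j - e b (cc j)) / p) with hs
  have hsc : ∀ b, Continuous (s b) := by
    intro b
    have := hρ.cont
    simp only [hs]
    fun_prop
  have hss : ∀ b b' y, dist b y < η / 2 → dist b' y < η / 2 → s b' y ^ p = s b y ^ p := by
    intro b b' y hb hb'
    have h1 : s b' y = ep (e b b' / p) * s b y := by
      simp only [hs]
      rw [Finset.mul_sum]
      refine Finset.sum_congr rfl (fun j _ => ?_)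
      rcases (hρ.nonneg j y).eq_or_lt with h0 | h0
      · rw [← h0]; simp
      · have h2 := hcc1 j y h0
        obtain ⟨k, hk⟩ := he b b' (cc j) (by linarith [dist_triangle_right b b' y])
          (by linarith [dist_triangle b' y (cc j)]) (by linarith [dist_triangle b y (cc j)])
        have hk' : (e b' (cc j) : ℝ) - e b (cc j) + e b b' = p * k := by exact_mod_cast hk
        have h3 : (t j - e b' (cc j)) / (p:ℝ) = e b b' / p + (t j - e b (cc j)) / p + ((-k : ℤ) : ℝ) := by
          push_cast
          field_simp
          linear_combination -hk'
        rw [h3, ep_add, ep_add, ep_int]; ring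
    rw [h1, mul_pow, ep_pow]
    have h4 : (p:ℝ) * (e b b' / p) = ((e b b' : ℤ) : ℝ) := by field_simp
    rw [h4, ep_int, one_mul]
  have hself : ∀ y : P, dist y y < η / 2 := fun y => by rw [dist_self]; positivity
  have hzero : ∀ y, s y y ^ p = 0 → (act n ρ y).card = 3 := by
    intro y hy
    have hy := eq_zero_of_pow_eq_zero hy
    by_contra hne
    have hle := hcard y
    have hpos := (act_nonempty hρ y).card_pos
    have hsum : s y y = ∑ j ∈ act n ρ y, (ρ j y : ℂ) * ep ((t j - e y (cc j)) / p) := by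
      simp only [hs]
      symm
      apply Finset.sum_subset
      · intro j hj; exact (Finset.mem_filter.1 hj).1
      · intro j _ hj
        rw [mem_act hρ] at hj
        rw [le_antisymm (not_lt.1 hj) (hρ.nonneg j y)]; simp
    rw [hsum] at hy
    have h12 : (act n ρ y).card = 1 ∨ (act n ρ y).card = 2 := by omega
    rcases h12 with h | h
    · obtain ⟨j, hj⟩ := Finset.card_eq_one.1 h
      have hjp : 0 < ρ j y := (mem_act hρ).1 (by rw [hj]; simp)
      rw [hj, Finset.sum_singleton] at hy
      rcases mul_eq_zero.1 hy with h0 | h0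
      · exact hjp.ne' (by exact_mod_cast h0)
      · exact ep_ne _ h0
    · obtain ⟨j, k, hjk, hjk'⟩ := Finset.card_eq_two.1 h
      have hjp : 0 < ρ j y := (mem_act hρ).1 (by rw [hjk']; simp)
      have hkp : 0 < ρ k y := (mem_act hρ).1 (by rw [hjk']; simp)
      rw [hjk', Finset.sum_pair hjk] at hy
      have h1 : (ρ j y : ℂ) * ep ((t j - e y (cc j)) / p) = -((ρ k y : ℂ) * ep ((t k - e y (cc k)) / p)) :=
        eq_neg_of_add_eq_zero_left hy
      have h2 := congrArg norm h1
      rw [norm_neg, norm_mul, norm_mul, ep_norm, ep_norm, mul_one, mul_one, Complex.norm_real,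
        Complex.norm_real, Real.norm_of_nonneg hjp.le, Real.norm_of_nonneg hkp.le] at h2
      rw [h2, ← mul_neg] at h1
      have h3 := mul_left_cancel₀ (by exact_mod_cast hkp.ne') h1
      have h4 : ep (2 * ((t j - e y (cc j)) / p - (t k - e y (cc k)) / p)) = 1 := by
        have e1 : ep (2 * ((t j - e y (cc j)) / p - (t k - e y (cc k)) / p)) * ep ((t k - e y (cc k)) / p) ^ 2
          = ep ((t j - e y (cc j)) / p) ^ 2 := by
          rw [ep_pow, ep_pow, ← ep_add]
          congr 1; push_cast; ring
        rw [h3, neg_sq] at e1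
        exact mul_right_cancel₀ (pow_ne_zero 2 (ep_ne _)) (by rw [e1, one_mul])
      obtain ⟨m, hm⟩ := ep_one _ h4
      apply hgen j k hjk (m * p + 2 * e y (cc j) - 2 * e y (cc k))
      field_simp at hm
      push_cast
      linear_combination hm
  have hloc : ∀ y, (act n ρ y).card = 3 → ∀ᶠ z in nhds y, act n ρ z = act n ρ y := by
    intro y hy
    have h1 : ∀ᶠ z in nhds y, ∀ j ∈ act n ρ y, 0 < ρ j z := by
      rw [Filter.eventually_all_finset]
      intro j hj
      exact (hρ.cont j).continuousAt.eventually (lt_mem_nhds ((mem_act hρ).1 hj))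
    filter_upwards [h1] with z hz
    symm
    apply Finset.eq_of_subset_of_card_le
    · intro j hj; exact (mem_act hρ).2 (hz j hj)
    · rw [hy]; exact hcard z
  set i : P → ℕ := fun y => (act n ρ y).min' (act_nonempty hρ y) with hi
  have hia : ∀ y, 0 < ρ (i y) y := fun y => (mem_act hρ).1 (Finset.min'_mem _ _)
  refine ⟨fun y => s y y ^ p, {y | (act n ρ y).card = 3}, fun y => s (cc (i y)) y, ?_, ?_, ?_, ?_, hzero, ?_⟩
  · rw [continuous_iff_continuousAt]
    intro b
    have h1 : ContinuousAt (fun y => s b y ^ p) b := ((hsc b).pow p).continuousAt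
    refine h1.congr ?_
    filter_upwards [Metric.ball_mem_nhds b (by positivity : 0 < η / 2)] with y hy
    rw [Metric.mem_ball, dist_comm] at hy
    exact (hss b y y hy (hself y)).symm
  · rw [isOpen_iff_mem_nhds]
    intro y hy
    filter_upwards [hloc y hy] with z hz
    show (act n ρ z).card = 3
    rw [hz]; exact hy
  · intro y hy
    apply ContinuousAt.continuousWithinAt
    have h1 : ContinuousAt (fun z => s (cc (i y)) z) y := (hsc _).continuousAt
    refine h1.congr ?_
    filter_upwards [hloc y hy] with z hz
    have : i z = i y := by simp only [hi, hz]
    rw [this]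
  · intro y _
    refine hss y (cc (i y)) y (hself y) ?_
    rw [dist_comm]
    exact hcc1 _ _ (hia y)
  · intro y hy
    set u : ℂ := ∑ j ∈ Finset.range n, (ρ j y : ℂ) * ep ((t j - e y (cc j) - tau (f y)) / p) with hu
    have h1 : s y y = ep (tau (f y) / p) * u := by
      simp only [hs, hu]
      rw [Finset.mul_sum]
      refine Finset.sum_congr rfl (fun j _ => ?_)
      have : (t j - e y (cc j)) / (p:ℝ) = tau (f y) / p + (t j - e y (cc j) - tau (f y)) / p := by ring
      rw [this, ep_add]; ring
    have h2 : ‖u - 1‖ < r := by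
      have e1 : (1:ℂ) = ∑ j ∈ Finset.range n, (ρ j y : ℂ) := by
        rw [← Complex.ofReal_sum, hρ.sum, Complex.ofReal_one]
      have e2 : u - 1 = ∑ j ∈ Finset.range n, (ρ j y : ℂ) * (ep ((t j - e y (cc j) - tau (f y)) / p) - 1) := by
        conv_lhs => rw [e1]
        rw [hu, ← Finset.sum_sub_distrib]
        exact Finset.sum_congr rfl (fun j _ => by ring)
      rw [e2]
      have e3 : r / 2 = ∑ j ∈ Finset.range n, ρ j y * (r / 2) := by
        rw [← Finset.sum_mul, hρ.sum, one_mul]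
      refine lt_of_le_of_lt ((norm_sum_le _ _).trans ?_) (half_lt_self hr)
      rw [e3]
      refine Finset.sum_le_sum (fun j hj => ?_)
      rw [norm_mul, Complex.norm_real, Real.norm_of_nonneg (hρ.nonneg j y)]
      rcases (hρ.nonneg j y).eq_or_lt with h0 | h0
      · rw [← h0]; simp
      · refine mul_le_mul_of_nonneg_left ?_ h0.le
        refine (ep_sub_one _).trans ?_
        obtain ⟨h3, h4⟩ := htau y (cc j) (hcc2 j y h0) hy
        have h5 := ht j (Finset.mem_range.1 hj)
        rw [hek y (cc j) (by linarith [hcc1 j y h0]) h3]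
        have h6 : |t j - (((1:ℕ) * kap (f y) (f (cc j)) : ℤ) : ℝ) - tau (f y)| ≤ 2 * ε := by
          push_cast
          rw [abs_le] at *
          constructor <;> linarith
        have h7 : |(t j - (((1:ℕ) * kap (f y) (f (cc j)) : ℤ) : ℝ) - tau (f y)) / p| ≤ 2 * ε := by
          rw [abs_div, abs_of_pos hp']
          exact (div_le_self (abs_nonneg _) hp1).trans h6
        calc _ ≤ 2 * Real.pi * (2 * ε) := mul_le_mul_of_nonneg_left h7 (by positivity)
          _ = r / 2 := by rw [hε]; field_simp; ring
    have h3 : s y y ^ p * (starRingEnd ℂ) (f y) = ((‖f y‖ : ℝ) : ℂ) * u ^ p := by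
      have hfy : (starRingEnd ℂ) (f y) = ((‖f y‖ : ℝ) : ℂ) * ep (-tau (f y)) := by
        conv_lhs => rw [polar (f y)]
        rw [map_mul, Complex.conj_ofReal, ep_conj]
      rw [hfy, h1, mul_pow, ep_pow]
      have e1 : (p:ℝ) * (tau (f y) / p) = tau (f y) := by field_simp
      have e2 : ep (tau (f y)) * ep (-tau (f y)) = 1 := by
        rw [← ep_add, add_neg_cancel]; simpa using ep_int 0
      rw [e1]
      linear_combination (((‖f y‖ : ℝ) : ℂ) * u ^ p) * e2
    show 0 < (s y y ^ p * (starRingEnd ℂ) (f y)).re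
    rw [h3, Complex.re_ofReal_mul]
    exact mul_pos (by linarith) (hpow u h2)

theorem main_c (hP : topDim P ≤ 2) (hPP : ¬ topDim (P × P) ≤ 3) :
    ∃ (F : Type) (_ : Field F) (gs : List (P → ℝ)), gs.length = 2 ∧ (∀ g ∈ gs, Continuous g) ∧ Ess F gs := by
  by_contra hcon
  have hno : ∀ (F : Type) (inst : Field F) (f : P → ℂ), Continuous f → ¬ Ess F (two f) := by
    intro F inst f hf hE
    refine hcon ⟨F, inst, two f, rfl, ?_, hE⟩
    intro g hg
    simp only [two, List.mem_cons, List.not_mem_nil, or_false] at hg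
    rcases hg with rfl | rfl
    · exact Complex.continuous_re.comp hf
    · exact (Complex.continuous_im.comp hf).neg
  apply hPP
  refine topDim_sq_le hP (fun f f' hf hf' => ?_)
  rcases isEmpty_or_nonempty P with hemp | hne
  · exact ⟨fun _ => 0, continuous_const, fun q => hemp.elim q.1, fun q => hemp.elim q.1⟩
  obtain ⟨d, hd, hC⟩ := coc_q f' (hno ℚ inferInstance f' hf')
  refine ext_all (fun p hp f hf => ?_) d hd f' hf' (lemA hP f' hf' d hd hC) f hf
  haveI : Fact p.Prime := ⟨hp⟩
  exact lemB hP p hp.ne_zero f hf (coc_p p f (hno (ZMod p) inferInstance f hf))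

end Roots
end MeanDimPaper

namespace MeanDimPaper

variable {X : Type*} [TopologicalSpace X]

/-- for compact metric spaces `P`, `Q` with `dim P = dim Q = 2`,
`dim (P × Q) = 3`, and `P`, `Q`, `P × Q` all of basic type (e.g. the Pontryagin
surfaces), the full shifts satisfy `mdim(P^ℤ, σ₁) = mdim(Q^ℤ, σ₂) = 2` and
`mdim(P^ℤ × Q^ℤ, σ₁ × σ₂) = 3`; in particular the product inequality for mean
dimension is strict here. -/
theorem mdim_fullshift_pontryagin {P Q : Type*}
    [MetricSpace P] [CompactSpace P] [MetricSpace Q] [CompactSpace Q]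
    (hP : topDim P = 2) (hQ : topDim Q = 2) (hPQ : topDim (P × Q) = 3)
    (hPb : topDim (P × P) = 2 * topDim P) (hQb : topDim (Q × Q) = 2 * topDim Q)
    (hPQb : topDim ((P × Q) × (P × Q)) = 2 * topDim (P × Q))
    (d₁ : (ℤ → P) → (ℤ → P) → ℝ) (hd₁ : IsCompatMetric d₁)
    (d₂ : (ℤ → Q) → (ℤ → Q) → ℝ) (hd₂ : IsCompatMetric d₂)
    (d₃ : ((ℤ → P) × (ℤ → Q)) → ((ℤ → P) × (ℤ → Q)) → ℝ) (hd₃ : IsCompatMetric d₃) :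
    mdim (shift P) d₁ = 2 ∧ mdim (shift Q) d₂ = 2 ∧
      mdim (Prod.map (shift P) (shift Q)) d₃ = 3 ∧
      mdim (Prod.map (shift P) (shift Q)) d₃ <
        mdim (shift P) d₁ + mdim (shift Q) d₂ := by
  have hP4 : ¬ topDim (P × P) ≤ 3 := by
    rw [hPb, hP]; norm_num
  have hQ4 : ¬ topDim (Q × Q) ≤ 3 := by
    rw [hQb, hQ]; norm_num
  exact final hP hQ hPQ (main_c hP.le hP4) (main_c hQ.le hQ4) d₁ hd₁ d₂ hd₂ d₃ hd₃

end MeanDimPaper
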